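/- arXiv:1502.04429 — 2 statements merged into one kernel-verified Lean document; each statement's English description precedes it below -/
import Mathlib

section
/- Let c be a positive integer and let S and T be ordered trees. There exists an ordered tree U such that for every coloring with c colors of the set of all rigid surjections from U to S there is a rigid surjection g₀ : U → T such that the set { f ∘ g₀ : f is a rigid surjection from T to S } is monochromatic. -/
/-- `w` is an immediate successor of `v` with respect to the order `le`. -/
def TreeImmSucc {α : Type} (le : α → α → Prop) (v w : α) : Prop :=
  le v w ∧ v ≠ w ∧ ∀ u, le v u → le u w → u = v ∨ u = w

/-- An *ordered tree*: a finite nonempty partial order `(α, le)` with a least element (the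
root) in which the set of predecessors of each element is linearly ordered, together with a
linear order `sOrd v` on the set of immediate successors of each vertex `v`. -/
structure OTree where
  α : Type
  fin : Finite α
  le : α → α → Prop
  le_refl : ∀ v, le v v
  le_antisymm : ∀ v w, le v w → le w v → v = w
  le_trans : ∀ u v w, le u v → le v w → le u w
  root : α
  root_le : ∀ v, le root v
  pred_linear : ∀ v a b, le a v → le b v → le a b ∨ le b a
  sOrd : α → α → α → Prop
  sOrd_dom : ∀ v a b, sOrd v a b → TreeImmSucc le v a ∧ TreeImmSucc le v b
  sOrd_refl : ∀ v a, TreeImmSucc le v a → sOrd v a a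
  sOrd_antisymm : ∀ v a b, sOrd v a b → sOrd v b a → a = b
  sOrd_trans : ∀ v a b c, sOrd v a b → sOrd v b c → sOrd v a c
  sOrd_total : ∀ v a b, TreeImmSucc le v a → TreeImmSucc le v b → sOrd v a b ∨ sOrd v b a

namespace OTree

/-- `m` is the meet (largest common predecessor) of `v` and `w`. -/
def IsMeet (T : OTree) (v w m : T.α) : Prop :=
  T.le m v ∧ T.le m w ∧ ∀ u, T.le u v → T.le u w → T.le u m

/-- The lexicographic linear order on an ordered tree: `v ≤ w` iff `v` is a predecessor of
`w`, or neither is a predecessor of the other and the predecessor of `v` among the immediate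
successors of `v ∧ w` precedes that of `w` in the given order on immediate successors. -/
def lexLE (T : OTree) (v w : T.α) : Prop :=
  T.le v w ∨ (¬ T.le v w ∧ ¬ T.le w v ∧
    ∃ m a b, T.IsMeet v w m ∧ TreeImmSucc T.le m a ∧ T.le a v ∧
      TreeImmSucc T.le m b ∧ T.le b w ∧ T.sOrd m a b)

/-- A *morphism* of ordered trees: preserves meets, is monotone for the lexicographic orders,
and maps root to root. -/
def IsMorphism (S T : OTree) (e : S.α → T.α) : Prop :=
  (∀ v w m, S.IsMeet v w m → T.IsMeet (e v) (e w) (e m)) ∧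
  (∀ v w, S.lexLE v w → T.lexLE (e v) (e w)) ∧
  e S.root = T.root

/-- `f : T → S` is a *rigid surjection* if there is a morphism `e : S → T` with
`e (f w) ⊑ w` for all `w ∈ T` and `f (e v) = v` for all `v ∈ S`. -/
def IsRigidSurjection (T S : OTree) (f : T.α → S.α) : Prop :=
  ∃ e : S.α → T.α, IsMorphism S T e ∧ (∀ w : T.α, T.le (e (f w)) w) ∧ (∀ v : S.α, f (e v) = v)

end OTree

open OTree

/-!
An ordered tree is its root together with an ordered forest, and forests are built from smaller
ones by adding a root below or by juxtaposition. To induct along this construction one generalises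
rigid surjections to labellings by letters of a finite alphabet `A` which are rigid over a
labelling `σ` of a forest `S`: a section `e` places `S` in `U`, and every vertex of `U` carries
either a letter or the label of a vertex of `S` placed below it. Rigid surjections onto a tree are
the labellings of the forest above the root for which the root is the only letter.

The Ramsey property is proved by induction on `S`, written as a first tree followed by a forest.
If the first root of `S` is placed at `t` with the word `w` of letters on the path below `t`, then
the rest of the labelling consists of pieces rigid over smaller forests. By the induction hypothesis
the colour can be made to depend only on `(t, w)`. The Hales-Jewett theorem, applied along
the branches of tall towers, gives a copy of the tree in which it no longer depends on the letters
of `w`, and a partition theorem for colourings of vertices makes it independent of `t`.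
-/

/-- Finite ordered forests. The constructor `append` is free, so that a forest may be written in
several ways; only its ordered set of vertices matters. -/
inductive Forest : Type
  | nil : Forest
  | tree (c : Forest) : Forest
  | append (X Y : Forest) : Forest

namespace Forest

/-- The vertices of a forest: `root` and `child v` lie in `tree c`, and `inl v`, `inr v` in
`X.append Y`. -/
inductive Vertex : Forest → Type
  | root {c : Forest} : Vertex (tree c)
  | child {c : Forest} (v : Vertex c) : Vertex (tree c)
  | inl {X Y : Forest} (v : Vertex X) : Vertex (X.append Y)
  | inr {X Y : Forest} (v : Vertex Y) : Vertex (X.append Y)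

open Vertex

variable {c d X Y Z S T U : Forest}

instance : IsEmpty (Vertex nil) := ⟨nofun⟩

namespace Vertex

/-- The function on the vertices of `tree c` with value `a` at the root and `f` below it. -/
def treeElim {α : Type*} (a : α) (f : Vertex c → α) : Vertex (tree c) → α
  | root => a
  | child v => f v

/-- The function on the vertices of `X.append Y` which is `f` on `X` and `g` on `Y`. -/
def appendElim {α : Type*} (f : Vertex X → α) (g : Vertex Y → α) : Vertex (X.append Y) → α
  | inl v => f v
  | inr v => g v

section Elim

variable {α : Type*} (a : α) (f : Vertex X → α) (g : Vertex Y → α)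

@[simp] theorem treeElim_root : treeElim a f root = a := rfl
@[simp] theorem treeElim_child (v : Vertex X) : treeElim a f (child v) = f v := rfl
@[simp] theorem appendElim_inl (v : Vertex X) : appendElim f g (inl v) = f v := rfl
@[simp] theorem appendElim_inr (v : Vertex Y) : appendElim f g (inr v) = g v := rfl
@[simp] theorem treeElim_comp_child : treeElim a f ∘ child = f := rfl
@[simp] theorem appendElim_comp_inl : appendElim f g ∘ inl = f := rfl
@[simp] theorem appendElim_comp_inr : appendElim f g ∘ inr = g := rfl

theorem range_treeElim : Set.range (treeElim a f) = insert a (Set.range f) := by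
  refine Set.ext fun x => ⟨?_, ?_⟩
  · rintro ⟨_ | v, rfl⟩
    exacts [.inl rfl, .inr ⟨v, rfl⟩]
  · rintro (rfl | ⟨v, rfl⟩)
    exacts [⟨root, rfl⟩, ⟨child v, rfl⟩]

theorem range_appendElim : Set.range (appendElim f g) = Set.range f ∪ Set.range g := by
  refine Set.ext fun x => ⟨?_, ?_⟩
  · rintro ⟨_ | _ | v | v, rfl⟩
    exacts [.inl ⟨v, rfl⟩, .inr ⟨v, rfl⟩]
  · rintro (⟨v, rfl⟩ | ⟨v, rfl⟩)
    exacts [⟨inl v, rfl⟩, ⟨inr v, rfl⟩]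

end Elim

instance (X : Forest) : Finite (Vertex X) := by
  induction X with
  | nil => infer_instance
  | tree c ih =>
    refine Finite.of_surjective (fun o : Option (Vertex c) => o.elim root child) ?_
    rintro (_ | v)
    exacts [⟨none, rfl⟩, ⟨some v, rfl⟩]
  | append X Y ihX ihY =>
    refine Finite.of_surjective (Sum.elim (inl : Vertex X → Vertex (X.append Y)) inr) ?_
    rintro (_ | _ | v | v)
    exacts [⟨.inl v, rfl⟩, ⟨.inr v, rfl⟩]

/-- The ancestor relation; it is the order `≤` on `Vertex X`. -/
protected def IsAncestor : {X : Forest} → Vertex X → Vertex X → Prop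
  | _, root, _ => True
  | _, child _, root => False
  | _, child v, child w => v.IsAncestor w
  | _, inl v, inl w => v.IsAncestor w
  | _, inl _, inr _ => False
  | _, inr _, inl _ => False
  | _, inr v, inr w => v.IsAncestor w

/-- `v.LeftOf w`: the vertices `v` and `w` are incomparable and `v` comes first in the
lexicographic order. -/
def LeftOf : {X : Forest} → Vertex X → Vertex X → Prop
  | _, root, _ => False
  | _, child _, root => False
  | _, child v, child w => v.LeftOf w
  | _, inl v, inl w => v.LeftOf w
  | _, inl _, inr _ => True
  | _, inr _, inl _ => False
  | _, inr v, inr w => v.LeftOf w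

instance : LE (Vertex X) := ⟨Vertex.IsAncestor⟩

section Simp

variable (v w : Vertex X) (v' w' : Vertex Y)

@[simp] theorem root_le (v : Vertex (tree X)) : root ≤ v := by cases v <;> trivial
@[simp] theorem not_child_le_root : ¬ child v ≤ root := id
@[simp] theorem child_le_child : child v ≤ child w ↔ v ≤ w := Iff.rfl
@[simp] theorem inl_le_inl : (inl v : Vertex (X.append Y)) ≤ inl w ↔ v ≤ w := Iff.rfl
@[simp] theorem inr_le_inr : (inr v' : Vertex (X.append Y)) ≤ inr w' ↔ v' ≤ w' := Iff.rfl
@[simp] theorem not_inl_le_inr : ¬ (inl v : Vertex (X.append Y)) ≤ inr v' := id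
@[simp] theorem not_inr_le_inl : ¬ (inr v' : Vertex (X.append Y)) ≤ inl v := id

@[simp] theorem not_root_leftOf (v : Vertex (tree X)) : ¬ root.LeftOf v := by cases v <;> exact id
@[simp] theorem not_leftOf_root (v : Vertex (tree X)) : ¬ v.LeftOf root := by cases v <;> exact id
@[simp] theorem child_leftOf_child : (child v).LeftOf (child w) ↔ v.LeftOf w := Iff.rfl
@[simp] theorem inl_leftOf_inl :
    (inl v : Vertex (X.append Y)).LeftOf (inl w) ↔ v.LeftOf w := Iff.rfl
@[simp] theorem inr_leftOf_inr :
    (inr v' : Vertex (X.append Y)).LeftOf (inr w') ↔ v'.LeftOf w' := Iff.rfl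
@[simp] theorem inl_leftOf_inr : (inl v : Vertex (X.append Y)).LeftOf (inr v') := trivial
@[simp] theorem not_inr_leftOf_inl : ¬ (inr v' : Vertex (X.append Y)).LeftOf (inl v) := id

end Simp

instance : PartialOrder (Vertex X) where
  le_refl v := by induction v <;> simp_all
  le_trans u v w := by
    induction u with
    | root => simp
    | _ u ih => cases v <;> cases w <;> first | exact ih _ _ | simp
  le_antisymm u v := by
    induction u with
    | root => cases v <;> simp
    | _ u ih => cases v <;> first | exact fun huv hvu => congrArg _ (ih _ huv hvu) | simp

theorem le_total_of_le {u v w : Vertex X} : u ≤ w → v ≤ w → u ≤ v ∨ v ≤ u := by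
  induction u with
  | root => simp
  | _ u ih => cases v <;> cases w <;> first | exact ih | simp

namespace LeftOf

variable {u v w u' v' : Vertex X}

theorem trans : u.LeftOf v → v.LeftOf w → u.LeftOf w := by
  induction u with
  | root => simp
  | _ u ih => cases v <;> cases w <;> first | exact ih | simp

theorem asymm : u.LeftOf v → ¬ v.LeftOf u := by
  induction u with
  | root => simp
  | _ u ih => cases v <;> first | exact ih | simp

theorem not_le : u.LeftOf v → ¬ u ≤ v := by
  induction u with
  | root => simp
  | _ u ih => cases v <;> first | exact ih | simp

theorem not_ge : u.LeftOf v → ¬ v ≤ u := by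
  induction u with
  | root => simp
  | _ u ih => cases v <;> first | exact ih | simp

theorem mono : u.LeftOf v → u ≤ u' → v ≤ v' → u'.LeftOf v' := by
  induction u with
  | root => simp
  | _ u ih => cases v <;> cases u' <;> cases v' <;> first | exact ih | simp

end LeftOf

theorem le_or_ge_or_leftOf (v w : Vertex X) : v ≤ w ∨ w ≤ v ∨ v.LeftOf w ∨ w.LeftOf v := by
  induction v with
  | root => simp
  | _ v ih => cases w <;> first | exact ih _ | simp

end Vertex

/-! ### Morphisms of forests -/

/-- Embeddings for the ancestor relation and the left-right order. -/
structure IsEmb (e : Vertex S → Vertex T) : Prop where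
  le_iff : ∀ v w, e v ≤ e w ↔ v ≤ w
  leftOf : ∀ v w, v.LeftOf w → (e v).LeftOf (e w)

/-- Morphisms of forests: embeddings that preserve meets, where existing. -/
structure IsMor (e : Vertex S → Vertex T) : Prop extends IsEmb e where
  exists_meet : ∀ v w u, u ≤ e v → u ≤ e w → ∃ m, m ≤ v ∧ m ≤ w ∧ u ≤ e m

theorem IsEmb.injective {e : Vertex S → Vertex T} (he : IsEmb e) : Function.Injective e :=
  fun v w hvw => le_antisymm ((he.le_iff v w).1 hvw.le) ((he.le_iff w v).1 hvw.ge)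

theorem IsEmb.leftOf_iff {e : Vertex S → Vertex T} (he : IsEmb e) (v w : Vertex S) :
    (e v).LeftOf (e w) ↔ v.LeftOf w := by
  refine ⟨fun h => ?_, he.leftOf v w⟩
  rcases le_or_ge_or_leftOf v w with hvw | hvw | hvw | hvw
  · exact absurd ((he.le_iff v w).2 hvw) h.not_le
  · exact absurd ((he.le_iff w v).2 hvw) h.not_ge
  · exact hvw
  · exact absurd (he.leftOf w v hvw) h.asymm

theorem IsEmb.comp {e' : Vertex T → Vertex U} {e : Vertex S → Vertex T} (he' : IsEmb e')
    (he : IsEmb e) : IsEmb (e' ∘ e) :=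
  ⟨fun v w => (he'.le_iff _ _).trans (he.le_iff v w),
    fun v w h => he'.leftOf _ _ (he.leftOf v w h)⟩

theorem IsEmb.child : IsEmb (child : Vertex c → Vertex (tree c)) := ⟨by simp, by simp⟩

theorem IsMor.inl : IsMor (inl : Vertex X → Vertex (X.append Y)) := by
  refine ⟨⟨by simp, by simp⟩, ?_⟩
  rintro v w (_ | _ | u | u) hv hw
  · exact ⟨u, hv, hw, le_rfl⟩
  · simp at hv

theorem IsMor.inr : IsMor (inr : Vertex Y → Vertex (X.append Y)) := by
  refine ⟨⟨by simp, by simp⟩, ?_⟩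
  rintro v w (_ | _ | u | u) hv hw
  · simp at hv
  · exact ⟨u, hv, hw, le_rfl⟩

theorem IsMor.id : IsMor (id : Vertex S → Vertex S) :=
  ⟨⟨fun _ _ => Iff.rfl, fun _ _ h => h⟩, fun _ _ u hv hw => ⟨u, hv, hw, le_rfl⟩⟩

theorem IsMor.comp {e' : Vertex T → Vertex U} {e : Vertex S → Vertex T} (he' : IsMor e')
    (he : IsMor e) : IsMor (e' ∘ e) := by
  refine ⟨he'.toIsEmb.comp he.toIsEmb, fun v w u hv hw => ?_⟩
  obtain ⟨m', hm'v, hm'w, hum'⟩ := he'.exists_meet _ _ u hv hw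
  obtain ⟨m, hmv, hmw, hm'm⟩ := he.exists_meet v w m' hm'v hm'w
  exact ⟨m, hmv, hmw, hum'.trans ((he'.le_iff _ _).2 hm'm)⟩

theorem IsMor.of_isEmpty [IsEmpty (Vertex S)] (e : Vertex S → Vertex T) : IsMor e :=
  ⟨⟨isEmptyElim, isEmptyElim⟩, isEmptyElim⟩

theorem IsMor.child_comp {e : Vertex (tree d) → Vertex c} (he : IsMor e) :
    IsMor (child ∘ e) := by
  refine ⟨IsEmb.child.comp he.toIsEmb, ?_⟩
  rintro v w (_ | u) hv hw
  · exact ⟨root, root_le v, root_le w, root_le _⟩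
  · exact he.exists_meet v w u hv hw

theorem IsMor.tree {e : Vertex d → Vertex c} (he : IsMor e) :
    IsMor (treeElim root (child ∘ e)) := by
  refine ⟨⟨?_, ?_⟩, ?_⟩
  · rintro (_ | v) (_ | w) <;> simp [he.le_iff]
  · rintro (_ | v) (_ | w) <;> simp [he.leftOf_iff]
  · rintro (_ | v) (_ | w) u hv hw
    · exact ⟨root, le_rfl, le_rfl, hv⟩
    · exact ⟨root, le_rfl, root_le _, hv⟩
    · exact ⟨root, root_le _, le_rfl, hw⟩
    · rcases u with _ | u
      · exact ⟨root, root_le _, root_le _, le_rfl⟩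
      · obtain ⟨m, hmv, hmw, hum⟩ := he.exists_meet v w u hv hw
        exact ⟨child m, hmv, hmw, hum⟩

theorem IsMor.append {e : Vertex S → Vertex X} {e' : Vertex T → Vertex Y} (he : IsMor e)
    (he' : IsMor e') : IsMor (appendElim (Vertex.inl ∘ e) (Vertex.inr ∘ e')) := by
  refine ⟨⟨?_, ?_⟩, ?_⟩
  · rintro (_ | _ | v | v) (_ | _ | w | w) <;> simp [he.le_iff, he'.le_iff]
  · rintro (_ | _ | v | v) (_ | _ | w | w) <;> simp [he.leftOf_iff, he'.leftOf_iff]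
  · rintro (_ | _ | v | v) (_ | _ | w | w) (_ | _ | u | u) hv hw <;> try contradiction
    · obtain ⟨m, hmv, hmw, hum⟩ := he.exists_meet v w u hv hw
      exact ⟨.inl m, hmv, hmw, hum⟩
    · obtain ⟨m, hmv, hmw, hum⟩ := he'.exists_meet v w u hv hw
      exact ⟨.inr m, hmv, hmw, hum⟩

/-! ### Rigid labellings and parameter words -/

universe u

/-- A labelling `f` of `U` is rigid over a labelling `σ` of `S`, with alphabet `A` and section `e`,
if `e` is a morphism carrying `σ` to `f`, and every label `f w` outside `A` has been introduced at
a vertex `e v ≤ w`. For `σ = id` and `A = ∅` these are the rigid surjections from `U` to `S`. -/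
structure RigidLabelling {L : Type*} (A : Set L) (σ : Vertex S → L) (f : Vertex U → L)
    (e : Vertex S → Vertex U) : Prop where
  isMor : IsMor e
  apply_section : ∀ v, f (e v) = σ v
  mem_or_exists : ∀ w, f w ∈ A ∨ ∃ v, f w = σ v ∧ e v ≤ w

/-- The set of labellings of `U` which are rigid over `σ`. -/
def rigidLabellings {L : Type*} (A : Set L) (σ : Vertex S → L) (U : Forest) :
    Set (Vertex U → L) :=
  {f | ∃ e, RigidLabelling A σ f e}

namespace RigidLabelling

variable {L M : Type*} {A : Set L} {B : Set M}

protected theorem refl (A : Set L) (τ : Vertex T → L) : RigidLabelling A τ τ id :=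
  ⟨.id, fun _ => rfl, fun w => .inr ⟨w, rfl, le_rfl⟩⟩

theorem of_isEmpty [IsEmpty (Vertex S)] {σ : Vertex S → L} {f : Vertex U → L}
    (hf : ∀ w, f w ∈ A) (e : Vertex S → Vertex U) : RigidLabelling A σ f e :=
  ⟨.of_isEmpty e, isEmptyElim, fun w => .inl (hf w)⟩

theorem of_isMor {e : Vertex T → Vertex U} (he : IsMor e) (τ : Vertex T → L) {a : L} (ha : a ∈ A) :
    RigidLabelling A τ (Function.extend e τ fun _ => a) e := by
  refine ⟨he, he.injective.extend_apply _ _, fun w => ?_⟩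
  by_cases hw : ∃ v, e v = w
  · obtain ⟨v, rfl⟩ := hw
    exact .inr ⟨v, he.injective.extend_apply _ _ v, le_rfl⟩
  · rw [Function.extend_apply' _ _ _ hw]
    exact .inl ha

theorem comp {τ : Vertex T → L} {g : Vertex U → L} {e₁ : Vertex T → Vertex U} {σ : Vertex S → M}
    {φ : L → M} {e₂ : Vertex S → Vertex T} (hg : RigidLabelling A τ g e₁)
    (hf : RigidLabelling B σ (φ ∘ τ) e₂) (hφ : Set.MapsTo φ A B) :
    RigidLabelling B σ (φ ∘ g) (e₁ ∘ e₂) := by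
  refine ⟨hg.isMor.comp hf.isMor, fun v => ?_, fun w => ?_⟩
  · simpa [hg.apply_section] using hf.apply_section v
  · obtain hw | ⟨t, ht, htw⟩ := hg.mem_or_exists w
    · exact .inl (hφ hw)
    · rw [Function.comp_apply, ht]
      exact (hf.mem_or_exists t).imp_right fun ⟨v, hv, hvt⟩ =>
        ⟨v, hv, ((hg.isMor.le_iff _ _).2 hvt).trans htw⟩

theorem map {τ : Vertex T → L} {g : Vertex U → L} {e : Vertex T → Vertex U}
    (hg : RigidLabelling A τ g e) {φ : L → M} (hφ : Set.MapsTo φ A B) :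
    RigidLabelling B (φ ∘ τ) (φ ∘ g) e :=
  hg.comp (.refl B (φ ∘ τ)) hφ

theorem mono {A' : Set L} {τ : Vertex T → L} {g : Vertex U → L} {e : Vertex T → Vertex U}
    (hg : RigidLabelling A τ g e) (hA : A ⊆ A') : RigidLabelling A' τ g e :=
  hg.map (φ := id) hA

theorem tree {τ : Vertex (tree d) → L} {g : Vertex (tree c) → L} {e : Vertex d → Vertex c}
    (h : RigidLabelling (insert (τ root) A) (τ ∘ child) (g ∘ child) e)
    (hroot : g root = τ root) : RigidLabelling A τ g (treeElim root (child ∘ e)) := by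
  refine ⟨h.isMor.tree, ?_, ?_⟩
  · rintro (_ | v)
    exacts [hroot, h.apply_section v]
  · rintro (_ | w)
    · exact .inr ⟨root, hroot, le_rfl⟩
    · obtain (hw | hw) | ⟨v, hv, hvw⟩ := h.mem_or_exists w
      · exact .inr ⟨root, hw, root_le _⟩
      · exact .inl hw
      · exact .inr ⟨child v, hv, hvw⟩

theorem child {τ : Vertex (Forest.tree d) → L} {g : Vertex (Forest.tree c) → L}
    {e : Vertex (Forest.tree d) → Vertex c} (h : RigidLabelling A τ (g ∘ .child) e)
    (hroot : g root ∈ A) : RigidLabelling A τ g (.child ∘ e) := by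
  refine ⟨h.isMor.child_comp, h.apply_section, ?_⟩
  rintro (_ | w)
  exacts [.inl hroot, h.mem_or_exists w]

theorem append {τ : Vertex (S.append T) → L} {g : Vertex (X.append Y) → L}
    {e : Vertex S → Vertex X} {e' : Vertex T → Vertex Y}
    (h : RigidLabelling A (τ ∘ inl) (g ∘ inl) e) (h' : RigidLabelling A (τ ∘ inr) (g ∘ inr) e') :
    RigidLabelling A τ g (appendElim (inl ∘ e) (inr ∘ e')) := by
  refine ⟨h.isMor.append h'.isMor, ?_, ?_⟩
  · rintro (_ | _ | v | v)
    exacts [h.apply_section v, h'.apply_section v]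
  · rintro (_ | _ | w | w)
    · exact (h.mem_or_exists w).imp_right fun ⟨v, hv, hvw⟩ => ⟨inl v, hv, hvw⟩
    · exact (h'.mem_or_exists w).imp_right fun ⟨v, hv, hvw⟩ => ⟨inr v, hv, hvw⟩

theorem inl {τ : Vertex T → L} {g : Vertex (X.append Y) → L} {e : Vertex T → Vertex X}
    (h : RigidLabelling A τ (g ∘ .inl) e) (hA : ∀ w, g (.inr w) ∈ A) :
    RigidLabelling A τ g (.inl ∘ e) := by
  refine ⟨IsMor.inl.comp h.isMor, h.apply_section, ?_⟩
  rintro (_ | _ | w | w)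
  exacts [h.mem_or_exists w, .inl (hA w)]

theorem inr {τ : Vertex T → L} {g : Vertex (X.append Y) → L} {e : Vertex T → Vertex Y}
    (h : RigidLabelling A τ (g ∘ .inr) e) (hA : ∀ w, g (.inl w) ∈ A) :
    RigidLabelling A τ g (.inr ∘ e) := by
  refine ⟨IsMor.inr.comp h.isMor, h.apply_section, ?_⟩
  rintro (_ | _ | w | w)
  exacts [.inl (hA w), h.mem_or_exists w]

end RigidLabelling

section ParamWord

variable {L : Type*} {A : Set L} {U' : Forest}

/-- A parameter word: a rigid labelling of `U` over the vertices of `T`, in which vertices may also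
carry letters from `A`. -/
abbrev IsParamWord (A : Set L) (g : Vertex U → Vertex T ⊕ L) (e : Vertex T → Vertex U) : Prop :=
  RigidLabelling (Sum.inr '' A) Sum.inl g e

/-- Substitution of the labels `f t` for the parameters `t` in a parameter word. -/
def subst (f : Vertex T → L) (g : Vertex U → Vertex T ⊕ L) : Vertex U → L :=
  Sum.elim f id ∘ g

theorem subst_subst (f : Vertex T → L) (g₁ : Vertex U → Vertex T ⊕ L)
    (g₂ : Vertex U' → Vertex U ⊕ L) :
    subst (subst f g₁) g₂ = subst f (Sum.elim g₁ Sum.inr ∘ g₂) := by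
  funext w
  simp only [subst, Function.comp_apply]
  cases g₂ w <;> rfl

namespace IsParamWord

theorem subst {g : Vertex U → Vertex T ⊕ L} {e₁ : Vertex T → Vertex U} {σ : Vertex S → L}
    {f : Vertex T → L} {e₂ : Vertex S → Vertex T} (hg : IsParamWord A g e₁)
    (hf : RigidLabelling A σ f e₂) : RigidLabelling A σ (subst f g) (e₁ ∘ e₂) :=
  hg.comp hf (Set.mapsTo_image_iff.2 fun _ => id)

theorem comp {g₁ : Vertex U → Vertex T ⊕ L} {g₂ : Vertex U' → Vertex U ⊕ L}
    {e₁ : Vertex T → Vertex U} {e₂ : Vertex U → Vertex U'} (hg₂ : IsParamWord A g₂ e₂)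
    (hg₁ : IsParamWord A g₁ e₁) : IsParamWord A (Sum.elim g₁ Sum.inr ∘ g₂) (e₂ ∘ e₁) :=
  RigidLabelling.comp hg₂ hg₁ (Set.mapsTo_image_iff.2 fun _ => Set.mem_image_of_mem _)

theorem subst_mem {g : Vertex U → Vertex T ⊕ L} {e : Vertex T → Vertex U} (hg : IsParamWord A g e)
    {f : Vertex T → L} (hf : ∀ v, f v ∈ A) (w : Vertex U) : Forest.subst f g w ∈ A := by
  obtain ⟨a, ha, hw⟩ | ⟨v, hv, -⟩ := hg.mem_or_exists w
  · simpa [Forest.subst, ← hw] using ha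
  · simpa [Forest.subst, hv] using hf v

end IsParamWord

/-- Juxtaposition of two parameter words. -/
def paramAppend (g₁ : Vertex X → Vertex S ⊕ L) (g₂ : Vertex Y → Vertex T ⊕ L) :
    Vertex (X.append Y) → Vertex (S.append T) ⊕ L :=
  appendElim (Sum.map inl id ∘ g₁) (Sum.map inr id ∘ g₂)

theorem mapsTo_sumMap_letters (φ : Vertex S → Vertex T) :
    Set.MapsTo (Sum.map φ id) (Sum.inr '' A : Set (Vertex S ⊕ L)) (Sum.inr '' A) :=
  Set.mapsTo_image_iff.2 fun _ => Set.mem_image_of_mem _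

theorem IsParamWord.append {g₁ : Vertex X → Vertex S ⊕ L} {g₂ : Vertex Y → Vertex T ⊕ L}
    {e₁ : Vertex S → Vertex X} {e₂ : Vertex T → Vertex Y} (h₁ : IsParamWord A g₁ e₁)
    (h₂ : IsParamWord A g₂ e₂) :
    IsParamWord A (paramAppend g₁ g₂) (appendElim (inl ∘ e₁) (inr ∘ e₂)) :=
  RigidLabelling.append (h₁.map (mapsTo_sumMap_letters inl)) (h₂.map (mapsTo_sumMap_letters inr))

theorem subst_paramAppend (f : Vertex (S.append T) → L) (g₁ : Vertex X → Vertex S ⊕ L)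
    (g₂ : Vertex Y → Vertex T ⊕ L) :
    subst f (paramAppend g₁ g₂) = appendElim (subst (f ∘ inl) g₁) (subst (f ∘ inr) g₂) := by
  funext w
  rcases w with _ | _ | w | w
  · simp only [subst, paramAppend, Function.comp_apply, appendElim_inl]
    cases g₁ w <;> rfl
  · simp only [subst, paramAppend, Function.comp_apply, appendElim_inr]
    cases g₂ w <;> rfl

end ParamWord

/-! ### Ramsey families of labellings -/

section IsRamsey

variable {L : Type u} {A : Set L}

/-- For every finite colouring of the labellings of a suitable `U` there is a parameter word `g`
with parameters in `T` such that, within each class `C ∈ 𝒞` of labellings `f` of `T`, all the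
labellings `subst f g` have the same colour. -/
def IsRamsey (A : Set L) (𝒞 : Set (Set (Vertex T → L))) : Prop :=
  ∀ (K : Type u) [Finite K], ∃ U, ∀ χ : (Vertex U → L) → K,
    ∃ (g : Vertex U → Vertex T ⊕ L) (e : Vertex T → Vertex U), IsParamWord A g e ∧
      ∀ C ∈ 𝒞, ∀ f ∈ C, ∀ f' ∈ C, χ (subst f g) = χ (subst f' g)

namespace IsRamsey

variable {𝒞 𝒟 : Set (Set (Vertex T → L))}

theorem refine (h : IsRamsey A 𝒞) (h𝒟 : ∀ D ∈ 𝒟, D.Nonempty → ∃ C ∈ 𝒞, D ⊆ C) : IsRamsey A 𝒟 := by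
  intro K _
  obtain ⟨U, hU⟩ := h K
  refine ⟨U, fun χ => ?_⟩
  obtain ⟨g, e, hg, hχ⟩ := hU χ
  refine ⟨g, e, hg, fun D hD f hf f' hf' => ?_⟩
  obtain ⟨C, hC, hDC⟩ := h𝒟 D hD ⟨f, hf⟩
  exact hχ C hC f (hDC hf) f' (hDC hf')

theorem exists_color [Nonempty L] (h : IsRamsey A 𝒞) (K : Type u) [Finite K] :
    ∃ U, ∀ χ : (Vertex U → L) → K,
      ∃ (g : Vertex U → Vertex T ⊕ L) (e : Vertex T → Vertex U) (ρ : Set (Vertex T → L) → K),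
        IsParamWord A g e ∧ ∀ C ∈ 𝒞, ∀ f ∈ C, χ (subst f g) = ρ C := by
  classical
  obtain ⟨U, hU⟩ := h K
  refine ⟨U, fun χ => ?_⟩
  obtain ⟨g, e, hg, hχ⟩ := hU χ
  refine ⟨g, e, fun C => χ (subst (if hC : C.Nonempty then hC.some else Classical.arbitrary _) g),
    hg, fun C hC f hf => ?_⟩
  have hne : C.Nonempty := ⟨f, hf⟩
  simpa only [dif_pos hne] using hχ C hC f hf _ hne.some_mem

theorem insert (h : IsRamsey A 𝒞) {σ : Vertex S → L}
    (hσ : ∀ T', IsRamsey A {rigidLabellings A σ T'}) :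
    IsRamsey A (insert (rigidLabellings A σ T) 𝒞) := by
  intro K _
  obtain ⟨U₁, hU₁⟩ := h K
  obtain ⟨U₂, hU₂⟩ := hσ U₁ K
  refine ⟨U₂, fun χ => ?_⟩
  obtain ⟨g₂, e₂, hg₂, hχ₂⟩ := hU₂ χ
  obtain ⟨g₁, e₁, hg₁, hχ₁⟩ := hU₁ fun h => χ (subst h g₂)
  refine ⟨_, _, hg₂.comp hg₁, ?_⟩
  rintro C (rfl | hC) f hf f' hf' <;> rw [← subst_subst, ← subst_subst]
  · obtain ⟨e, he⟩ := hf
    obtain ⟨e', he'⟩ := hf'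
    exact hχ₂ _ rfl _ ⟨_, hg₁.subst he⟩ _ ⟨_, hg₁.subst he'⟩
  · exact hχ₁ C hC f hf f' hf'

theorem append [Finite L] {𝒞 : Set (Set (Vertex S → L))} (h𝒞 : IsRamsey A 𝒞)
    (h𝒟 : IsRamsey A 𝒟) :
    IsRamsey A (Set.image2 (fun C D => {f : Vertex (S.append T) → L | f ∘ inl ∈ C ∧ f ∘ inr ∈ D})
      𝒞 𝒟) := by
  intro K _
  obtain ⟨Y, hY⟩ := h𝒟 ((Vertex S → L) → K)
  obtain ⟨X, hX⟩ := h𝒞 ((Vertex Y → L) → K)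
  refine ⟨X.append Y, fun χ => ?_⟩
  obtain ⟨g₁, e₁, hg₁, hχ₁⟩ := hX fun h k => χ (appendElim h k)
  obtain ⟨g₂, e₂, hg₂, hχ₂⟩ := hY fun k f => χ (appendElim (subst f g₁) k)
  refine ⟨_, _, hg₁.append hg₂, ?_⟩
  rintro _ ⟨C, hC, D, hD, rfl⟩ f ⟨hfC, hfD⟩ f' ⟨hfC', hfD'⟩
  rw [subst_paramAppend, subst_paramAppend]
  exact (congrFun (hχ₁ C hC _ hfC _ hfC') (subst (f ∘ inr) g₂)).trans
    (congrFun (hχ₂ D hD _ hfD _ hfD') (f' ∘ inl))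

end IsRamsey

/-- The alphabet `A` with an additional letter `none`, which stands for the label of a root lying
below. -/
def withRootLetter (A : Set L) : Set (Option L) := insert none (some '' A)

/-- Interprets the entries of a parameter word of `c` over `withRootLetter A` in `tree c`: the
letter `none` becomes the parameter at the root. -/
def belowRoot : Vertex c ⊕ Option L → Vertex (tree c) ⊕ L :=
  Sum.elim (Sum.inl ∘ child) (Option.elim · (.inl root) .inr)

/-- Turns a parameter word of `c` over `withRootLetter A` into a parameter word of `tree c`. -/
def paramTree (g : Vertex X → Vertex c ⊕ Option L) : Vertex (tree X) → Vertex (tree c) ⊕ L :=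
  treeElim (.inl root) (belowRoot ∘ g)

theorem IsParamWord.paramTree {g : Vertex X → Vertex c ⊕ Option L} {e : Vertex c → Vertex X}
    (hg : IsParamWord (withRootLetter A) g e) :
    IsParamWord A (paramTree g) (treeElim root (child ∘ e)) := by
  refine RigidLabelling.tree (hg.map (φ := belowRoot) ?_) rfl
  rintro _ ⟨_, rfl | ⟨a, ha, rfl⟩, rfl⟩
  exacts [.inl rfl, .inr ⟨a, ha, rfl⟩]

theorem subst_paramTree {f : Vertex (tree c) → L} {h : Vertex c → Option L}
    (hf : ∀ v, f (child v) = (h v).getD (f root)) (g : Vertex X → Vertex c ⊕ Option L) :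
    subst f (paramTree g) = treeElim (f root) fun w => (subst h g w).getD (f root) := by
  funext w
  rcases w with _ | w
  · rfl
  · simp only [subst, paramTree, Function.comp_apply, treeElim_child]
    rcases g w with v | _ | l
    exacts [hf v, rfl, rfl]

theorem IsRamsey.tree [Finite L] {𝒞 : Set (Set (Vertex c → Option L))}
    (h𝒞 : IsRamsey (withRootLetter A) 𝒞) :
    IsRamsey A (Set.image2
      (fun l C => {f : Vertex (tree c) → L |
        f root = l ∧ ∃ h ∈ C, ∀ v, f (child v) = (h v).getD l}) Set.univ 𝒞) := by
  intro K _
  obtain ⟨X, hX⟩ := h𝒞 (L → K)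
  refine ⟨Forest.tree X, fun χ => ?_⟩
  obtain ⟨g, e, hg, hχ⟩ := hX fun h l => χ (treeElim l fun w => (h w).getD l)
  refine ⟨_, _, hg.paramTree, ?_⟩
  rintro _ ⟨l, -, C, hC, rfl⟩ f ⟨rfl, h, hhC, hf⟩ f' ⟨hroot, h', hhC', hf'⟩
  rw [← hroot] at hf'
  rw [subst_paramTree hf, subst_paramTree hf', hroot]
  exact congrFun (hχ C hC h hhC h' hhC') (f root)

end IsRamsey

/-- The dual Ramsey property of `S`: labellings rigid over a labelling of `S` are Ramsey. -/
def DualRamsey (S : Forest) : Prop :=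
  ∀ (L : Type u) [Finite L] (A : Set L), A.Nonempty → ∀ (σ : Vertex S → L) (T : Forest),
    IsRamsey A {rigidLabellings A σ T}

/-! ### Labellings by letters -/

theorem exists_mono_variable_word {L : Type*} (A : Set L) [Finite A] (K : Type*) [Finite K] :
    ∃ n : ℕ, ∀ χ : List L → K, ∃ w : List (Option L), w.length = n ∧ none ∈ w ∧
      (∀ a, some a ∈ w → a ∈ A) ∧
      ∀ a ∈ A, ∀ b ∈ A, χ (w.map (·.getD a)) = χ (w.map (·.getD b)) := by
  obtain ⟨ι, _, h⟩ := Combinatorics.Line.exists_mono_in_high_dimension A K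
  let enum := (Fintype.equivFin ι).symm
  refine ⟨Fintype.card ι, fun χ => ?_⟩
  obtain ⟨l, k, hl⟩ := h fun x => χ (List.ofFn fun i => (x (enum i) : L))
  refine ⟨List.ofFn fun i => (l.idxFun (enum i)).map Subtype.val, List.length_ofFn, ?_, ?_, ?_⟩
  · obtain ⟨i, hi⟩ := l.proper
    exact List.mem_ofFn.2 ⟨enum.symm i, by simp [hi]⟩
  · intro a ha
    obtain ⟨i, hi⟩ := List.mem_ofFn.1 ha
    obtain ⟨b, -, rfl⟩ := Option.map_eq_some_iff.1 hi
    exact b.2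
  · suffices ∀ a ∈ A, χ ((List.ofFn fun i => (l.idxFun (enum i)).map Subtype.val).map
        (·.getD a)) = k from fun a ha b hb => (this a ha).trans (this b hb).symm
    intro a ha
    rw [← hl ⟨a, ha⟩, List.map_ofFn]
    congr 2
    funext i
    simp only [Function.comp_apply, Combinatorics.Line.coe_apply]
    cases l.idxFun (enum i) <;> rfl

section Comb

variable {L : Type u} {A : Set L} {n : ℕ}

/-- A path of `n` vertices, the spine, with a copy of `c` attached above each of them. -/
def comb (c : Forest) : ℕ → Forest
  | 0 => nil
  | n + 1 => tree (c.append (comb c n))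

/-- The word of labels along the spine of a comb. -/
def spineWord : {n : ℕ} → (Vertex (comb c n) → L) → List L
  | 0, _ => []
  | _ + 1, f => f root :: spineWord (f ∘ child ∘ inr)

/-- The labellings of a comb by letters with a given word along the spine. -/
def spineClass (c : Forest) (n : ℕ) (A : Set L) (w : List L) : Set (Vertex (comb c n) → L) :=
  {f | (∀ v, f v ∈ A) ∧ spineWord f = w}

theorem spineWord_comp {M : Type*} (φ : L → M) (f : Vertex (comb c n) → L) :
    spineWord (φ ∘ f) = (spineWord f).map φ := by
  induction n with
  | zero => rfl
  | succ n ih => exact congrArg (φ (f root) :: ·) (ih _)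

theorem isRamsey_of_isEmpty [IsEmpty (Vertex T)] (𝒞 : Set (Set (Vertex T → L))) :
    IsRamsey A 𝒞 :=
  fun _ _ => ⟨T, fun _ => ⟨isEmptyElim, isEmptyElim, .of_isEmpty isEmptyElim _,
    fun _ _ f _ f' _ => by rw [Subsingleton.elim f f']⟩⟩

/-- Labellings by letters are Ramsey on `T`. -/
def LettersRamsey (T : Forest) : Prop :=
  ∀ (L : Type u) [Finite L] (A : Set L), A.Nonempty →
    IsRamsey A {{f : Vertex T → L | ∀ v, f v ∈ A}}

theorem isRamsey_spineClass (hc : LettersRamsey.{u} c) (n : ℕ) (L : Type u) [Finite L]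
    (A : Set L) : IsRamsey A (Set.range (spineClass c n A)) := by
  induction n generalizing L with
  | zero => exact isRamsey_of_isEmpty (T := nil) _
  | succ n ih =>
    refine ((hc (Option L) (withRootLetter A) ⟨none, .inl rfl⟩).append
      (ih (Option L) (withRootLetter A))).tree.refine ?_
    rintro _ ⟨_, rfl⟩ ⟨f₀, -, rfl⟩
    refine ⟨_, ⟨f₀ root, trivial, _, ⟨_, rfl, _, ⟨(spineWord (f₀ ∘ child ∘ inr)).map some, rfl⟩,
      rfl⟩, rfl⟩, ?_⟩
    rintro f ⟨hfA, hf⟩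
    obtain ⟨hroot, hspine⟩ := List.cons.inj hf
    refine ⟨hroot, some ∘ f ∘ child, ⟨fun v => .inr ⟨_, hfA _, rfl⟩,
      fun v => .inr ⟨_, hfA _, rfl⟩, ?_⟩, fun v => rfl⟩
    exact (spineWord_comp some (f ∘ child ∘ inr)).trans (congrArg (List.map some) hspine)

theorem exists_mem_spineClass (c : Forest) (hA : A.Nonempty) {w : List L} (hw : ∀ a ∈ w, a ∈ A)
    (hn : w.length = n) : (spineClass c n A w).Nonempty := by
  subst hn
  obtain ⟨a₀, ha₀⟩ := hA
  induction w with
  | nil => exact ⟨fun _ => a₀, fun _ => ha₀, rfl⟩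
  | cons a w ih =>
    obtain ⟨ha, hw⟩ := List.forall_mem_cons.1 hw
    obtain ⟨k, hkA, hkw⟩ := ih hw
    refine ⟨treeElim a (appendElim (fun _ => a₀) k), ?_, congrArg (a :: ·) hkw⟩
    rintro (_ | (_ | _ | v | v))
    exacts [ha, ha₀, hkA v]

theorem exists_rigidLabelling_comb (hA : A.Nonempty) (τ : Vertex (tree c) → L) {w : List L}
    (hw : ∀ a ∈ w, a ∈ A ∨ a = τ root) (hroot : τ root ∈ w) (hn : w.length = n) :
    ∃ (g : Vertex (comb c n) → L) (e : Vertex (tree c) → Vertex (comb c n)),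
      RigidLabelling A τ g e ∧ spineWord g = w := by
  subst hn
  induction w with
  | nil => simp at hroot
  | cons a w ih =>
    obtain ⟨ha, hw⟩ := List.forall_mem_cons.1 hw
    by_cases haτ : a = τ root
    · obtain ⟨k, hkA, hkw⟩ := exists_mem_spineClass c (A := insert (τ root) A)
        (Set.insert_nonempty _ _) (fun b hb => (hw b hb).symm) rfl
      refine ⟨treeElim a (appendElim (τ ∘ child) k), _, .tree (.inl (.refl _ _) hkA) haτ,
        congrArg (a :: ·) hkw⟩
    · obtain ⟨g, e, hg, hgw⟩ := ih hw ((List.mem_cons.1 hroot).resolve_left (Ne.symm haτ))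
      obtain ⟨a₀, ha₀⟩ := hA
      exact ⟨treeElim a (appendElim (fun _ => a₀) g), _,
        .child (.inr hg fun _ => ha₀) (ha.resolve_right haτ), congrArg (a :: ·) hgw⟩

theorem LettersRamsey.tree (hc : LettersRamsey.{u} c) : LettersRamsey.{u} (tree c) := by
  intro L _ A hA K _
  have : Nonempty L := hA.to_type
  obtain ⟨n, hn⟩ := exists_mono_variable_word A K
  obtain ⟨U, hU⟩ := (isRamsey_spineClass hc n L A).exists_color K
  refine ⟨U, fun χ => ?_⟩
  obtain ⟨g₁, e₁, ρ, hg₁, hρ⟩ := hU χ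
  obtain ⟨w, hwn, hw_none, hwA, hw⟩ := hn fun l => ρ (spineClass c n A l)
  obtain ⟨g₂, e₂, hg₂, hg₂w⟩ : ∃ (g₂ : Vertex (comb c n) → Vertex (Forest.tree c) ⊕ L) (e₂ : _),
      IsParamWord A g₂ e₂ ∧ spineWord g₂ = w.map (Option.elim · (.inl root) .inr) := by
    refine exists_rigidLabelling_comb (hA.image _) _ ?_ (List.mem_map.2 ⟨none, hw_none, rfl⟩)
      (by rw [List.length_map, hwn])
    rintro _ hx
    obtain ⟨_ | a, ha, rfl⟩ := List.mem_map.1 hx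
    exacts [.inr rfl, .inl ⟨a, hwA a ha, rfl⟩]
  have hspine : ∀ f : Vertex (Forest.tree c) → L, (∀ v, f v ∈ A) →
      subst f g₂ ∈ spineClass c n A (w.map (·.getD (f root))) := by
    refine fun f hf => ⟨hg₂.subst_mem hf, ?_⟩
    rw [subst, spineWord_comp, hg₂w, List.map_map]
    congr 1
    funext x
    cases x <;> rfl
  refine ⟨_, _, hg₁.comp hg₂, ?_⟩
  rintro _ rfl f hf f' hf'
  rw [← subst_subst, ← subst_subst, hρ _ ⟨_, rfl⟩ _ (hspine f hf), hρ _ ⟨_, rfl⟩ _ (hspine f' hf')]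
  exact hw _ (hf _) _ (hf' _)

end Comb

theorem lettersRamsey (T : Forest) : LettersRamsey.{u} T := by
  induction T with
  | nil => exact fun L _ A _ => isRamsey_of_isEmpty _
  | tree c ih => exact ih.tree
  | append X Y ihX ihY =>
    refine fun L _ A hA => ((ihX L A hA).append (ihY L A hA)).refine ?_
    rintro _ rfl -
    exact ⟨_, ⟨_, rfl, _, rfl, rfl⟩, fun f hf => ⟨fun _ => hf _, fun _ => hf _⟩⟩

theorem dualRamsey_nil : DualRamsey.{u} nil := by
  refine fun L _ A hA σ T => (lettersRamsey T L A hA).refine ?_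
  rintro _ rfl -
  exact ⟨_, rfl, fun f ⟨e, he⟩ w => (he.mem_or_exists w).resolve_right fun ⟨v, _⟩ => isEmptyElim v⟩

/-! ### Normal forms of forests -/

theorem IsEmb.isMor_of_surjective {i : Vertex X → Vertex Y} (hi : IsEmb i)
    (hs : Function.Surjective i) : IsMor i := by
  refine ⟨hi, fun v w u hv hw => ?_⟩
  obtain ⟨m, rfl⟩ := hs u
  exact ⟨m, (hi.le_iff _ _).1 hv, (hi.le_iff _ _).1 hw, le_rfl⟩

theorem IsEmb.isMor_surjInv {i : Vertex X → Vertex Y} (hi : IsEmb i)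
    (hs : Function.Surjective i) : IsMor (Function.surjInv hs) := by
  refine IsEmb.isMor_of_surjective ⟨fun v w => ?_, fun v w h => ?_⟩
    ((Function.leftInverse_surjInv ⟨hi.injective, hs⟩).surjective)
  · rw [← hi.le_iff, Function.surjInv_eq hs, Function.surjInv_eq hs]
  · rwa [← hi.leftOf_iff, Function.surjInv_eq hs, Function.surjInv_eq hs]

/-- The isomorphism of `X.append nil` with `X`. -/
def removeNil : Vertex (X.append nil) → Vertex X :=
  appendElim id isEmptyElim

theorem isEmb_removeNil : IsEmb (removeNil : Vertex (X.append nil) → Vertex X) := by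
  refine ⟨?_, ?_⟩ <;> rintro (_ | _ | v | ⟨⟨⟩⟩) (_ | _ | w | ⟨⟨⟩⟩)
  exacts [Iff.rfl, id]

theorem removeNil_surjective :
    Function.Surjective (removeNil : Vertex (X.append nil) → Vertex X) :=
  fun v => ⟨inl v, rfl⟩

/-- The isomorphism of `X.append (Y.append Z)` with `(X.append Y).append Z`. -/
def reassoc : Vertex (X.append (Y.append Z)) → Vertex ((X.append Y).append Z) :=
  appendElim (inl ∘ inl) (appendElim (inl ∘ inr) inr)

theorem isEmb_reassoc :
    IsEmb (reassoc : Vertex (X.append (Y.append Z)) → Vertex ((X.append Y).append Z)) := by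
  refine ⟨?_, ?_⟩ <;>
    rintro (_ | _ | v | (_ | _ | v | v)) (_ | _ | w | (_ | _ | w | w)) <;> simp [reassoc]

theorem reassoc_surjective :
    Function.Surjective
      (reassoc : Vertex (X.append (Y.append Z)) → Vertex ((X.append Y).append Z)) := by
  rintro (_ | _ | (_ | _ | v | v) | v)
  exacts [⟨inl v, rfl⟩, ⟨inr (inl v), rfl⟩, ⟨inr (inr v), rfl⟩]

theorem induction_tree_append {motive : Forest → Prop} (nil : motive nil)
    (tree_append : ∀ c Y, motive c → motive Y → motive (c.tree.append Y))
    (of_surjective : ∀ X Y (i : Vertex X → Vertex Y), IsEmb i → Function.Surjective i →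
      motive X → motive Y) (X : Forest) : motive X := by
  suffices h : ∀ Y, motive Y → motive (X.append Y) from
    of_surjective _ _ _ isEmb_removeNil removeNil_surjective (h _ nil)
  induction X with
  | nil =>
    refine fun Y => of_surjective _ _ _ IsMor.inr.toIsEmb ?_
    rintro (_ | _ | ⟨⟨⟩⟩ | v)
    exact ⟨v, rfl⟩
  | tree c ih =>
    exact fun Y => tree_append c Y
      (of_surjective _ _ _ isEmb_removeNil removeNil_surjective (ih _ nil))
  | append X X' ih ih' =>
    exact fun Y hY => of_surjective _ _ _ isEmb_reassoc reassoc_surjective (ih _ (ih' _ hY))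

theorem RigidLabelling.comp_surjective {L : Type*} {A : Set L} {σ : Vertex S → L}
    {f : Vertex U → L} {e : Vertex S → Vertex U} (h : RigidLabelling A σ f e)
    {i : Vertex X → Vertex S} (hi : IsEmb i) (hs : Function.Surjective i) :
    RigidLabelling A (σ ∘ i) f (e ∘ i) := by
  refine ⟨h.isMor.comp (hi.isMor_of_surjective hs), fun v => h.apply_section _, fun w => ?_⟩
  refine (h.mem_or_exists w).imp_right fun ⟨v, hv, hvw⟩ => ?_
  obtain ⟨x, rfl⟩ := hs v
  exact ⟨x, hv, hvw⟩

theorem IsParamWord.of_surjective {L : Type*} (A : Set L) {i : Vertex X → Vertex Y} (hi : IsEmb i)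
    (hs : Function.Surjective i) :
    IsParamWord A (Sum.inl ∘ i) (Function.surjInv hs) := by
  refine ⟨hi.isMor_surjInv hs, fun v => congrArg Sum.inl (Function.surjInv_eq hs v), fun w => ?_⟩
  exact .inr ⟨i w, rfl, (Function.leftInverse_surjInv ⟨hi.injective, hs⟩ w).le⟩

/-! ### Paths -/

namespace Vertex

/-- The list of the vertices strictly below `v`, from the root upwards. -/
def path : {X : Forest} → Vertex X → List (Vertex X)
  | _, root => []
  | _, child v => root :: v.path.map child
  | _, inl v => v.path.map inl
  | _, inr v => v.path.map inr

theorem mem_path {u v : Vertex X} : u ∈ v.path ↔ u < v := by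
  induction v with
  | root => simp [path, lt_iff_le_not_ge]
  | _ v ih => cases u <;> simp [path, lt_iff_le_not_ge, ih]

theorem pairwise_lt_path (v : Vertex X) : v.path.Pairwise (· < ·) := by
  induction v with
  | root => exact .nil
  | _ v ih => simpa [path, List.pairwise_map, lt_iff_le_not_ge] using ih

end Vertex

theorem IsEmb.path_of_surjective {i : Vertex X → Vertex Y} (hi : IsEmb i)
    (hs : Function.Surjective i) (v : Vertex X) : (i v).path = v.path.map i := by
  have hlt : ∀ u w, i u < i w ↔ u < w := by simp [lt_iff_le_not_ge, hi.le_iff]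
  have hsorted : (v.path.map i).Pairwise (· < ·) := by
    simpa [List.pairwise_map, hlt] using pairwise_lt_path v
  refine List.Perm.eq_of_pairwise' (pairwise_lt_path _) hsorted
    ((List.perm_ext_iff_of_nodup (pairwise_lt_path _).nodup hsorted.nodup).2 fun w => ?_)
  obtain ⟨w, rfl⟩ := hs w
  simp [mem_path, hlt, List.mem_map, hi.injective.eq_iff]

/-- The word of labels strictly below a vertex. -/
def pathWord {L : Type*} (f : Vertex X → L) (v : Vertex X) : List L :=
  v.path.map f

section PathWord

variable {L : Type*}

@[simp] theorem pathWord_child (f : Vertex (tree c) → L) (v : Vertex c) :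
    pathWord f (child v) = f root :: pathWord (f ∘ child) v := by
  simp [pathWord, path]

@[simp] theorem pathWord_inl (f : Vertex (X.append Y) → L) (v : Vertex X) :
    pathWord f (inl v) = pathWord (f ∘ inl) v := by
  simp [pathWord, path]

@[simp] theorem pathWord_inr (f : Vertex (X.append Y) → L) (v : Vertex Y) :
    pathWord f (inr v) = pathWord (f ∘ inr) v := by
  simp [pathWord, path]

theorem pathWord_comp {M : Type*} (φ : L → M) (f : Vertex X → L) (v : Vertex X) :
    pathWord (φ ∘ f) v = (pathWord f v).map φ := by
  simp [pathWord]

theorem pathWord_congr {f f' : Vertex X → L} {v : Vertex X} (h : ∀ u < v, f u = f' u) :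
    pathWord f v = pathWord f' v :=
  List.map_congr_left fun u hu => h u (mem_path.1 hu)

end PathWord

/-! ### Restriction of rigid labellings -/

namespace RigidLabelling

variable {L : Type*} {A : Set L}

theorem restrict {B : Set L} {σ : Vertex S → L} {f : Vertex U → L} {e : Vertex S → Vertex U}
    (h : RigidLabelling A σ f e) (hAB : A ⊆ B) {i : Vertex X → Vertex U} (hi : IsEmb i)
    {j : Vertex Y → Vertex S} (hj : IsEmb j) (hrange : ∀ v, e (j v) ∈ Set.range i)
    (hmeet : ∀ u v, i u ≤ e v → v ∈ Set.range j)
    (hlow : ∀ v w, e v ≤ i w → v ∈ Set.range j ∨ σ v ∈ B) :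
    ∃ e', (∀ v, e (j v) = i (e' v)) ∧ RigidLabelling B (σ ∘ j) (f ∘ i) e' := by
  choose e' he' using hrange
  refine ⟨e', fun v => (he' v).symm, ⟨⟨fun v w => ?_, fun v w hvw => ?_⟩, fun v w u hv hw => ?_⟩,
    fun v => ?_, fun w => ?_⟩
  · rw [← hi.le_iff, he', he', h.isMor.le_iff, hj.le_iff]
  · rw [← hi.leftOf_iff, he', he']
    exact h.isMor.leftOf _ _ (hj.leftOf _ _ hvw)
  · rw [← hi.le_iff, he'] at hv hw
    obtain ⟨m, hmv, hmw, hum⟩ := h.isMor.exists_meet _ _ _ hv hw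
    obtain ⟨m, rfl⟩ := hmeet u m hum
    exact ⟨m, (hj.le_iff _ _).1 hmv, (hj.le_iff _ _).1 hmw, by rwa [← hi.le_iff, he']⟩
  · rw [Function.comp_apply, he', h.apply_section, Function.comp_apply]
  · obtain hw | ⟨v, hv, hvw⟩ := h.mem_or_exists (i w)
    · exact .inl (hAB hw)
    · obtain ⟨v, rfl⟩ | hvB := hlow v w hvw
      · exact .inr ⟨v, hv, by rwa [← hi.le_iff, he']⟩
      · exact .inl (by rwa [Function.comp_apply, hv])

theorem below_root {σ : Vertex (Forest.tree d) → L} {f : Vertex (Forest.tree c) → L}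
    {e : Vertex (Forest.tree d) → Vertex (Forest.tree c)} (h : RigidLabelling A σ f e)
    (hroot : e .root = .root) :
    ∃ e', RigidLabelling (insert (σ .root) A) (σ ∘ .child) (f ∘ .child) e' := by
  have hchild : ∀ v, e (.child v) ∈ Set.range (.child : Vertex c → _) := by
    intro v
    rcases hv : e (.child v) with _ | w
    · exact absurd (h.isMor.injective (hv.trans hroot.symm)) nofun
    · exact ⟨w, rfl⟩
  have hmeet : ∀ u v, .child u ≤ e v → v ∈ Set.range (.child : Vertex d → _) := by
    rintro u (_ | v) huv
    · simp [hroot] at huv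
    · exact ⟨v, rfl⟩
  obtain ⟨e', -, he'⟩ := h.restrict (Set.subset_insert (σ .root) A) .child .child hchild hmeet (by
    rintro (_ | v) w -
    exacts [.inr (.inl rfl), .inl ⟨v, rfl⟩])
  exact ⟨e', he'⟩

theorem of_ne_root {σ : Vertex S → L} {f : Vertex (Forest.tree c) → L}
    {e : Vertex S → Vertex (Forest.tree c)} (h : RigidLabelling A σ f e)
    (hroot : ∀ v, e v ≠ .root) :
    f .root ∈ A ∧ ∃ e', (∀ v, e v = .child (e' v)) ∧ RigidLabelling A σ (f ∘ .child) e' := by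
  have hchild : ∀ v, e v ∈ Set.range (.child : Vertex c → _) := by
    intro v
    rcases hv : e v with _ | w
    exacts [absurd hv (hroot v), ⟨w, rfl⟩]
  refine ⟨(h.mem_or_exists .root).resolve_right fun ⟨v, _, hv⟩ =>
    hroot v (le_antisymm hv (root_le _)), ?_⟩
  exact h.restrict subset_rfl .child IsMor.id.toIsEmb hchild (fun _ v _ => ⟨v, rfl⟩)
    fun v _ _ => .inl ⟨v, rfl⟩

theorem of_mem_range_inr {σ : Vertex S → L} {f : Vertex (X.append Y) → L}
    {e : Vertex S → Vertex (X.append Y)} (h : RigidLabelling A σ f e)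
    (hinr : ∀ v, e v ∈ Set.range (.inr : Vertex Y → _)) :
    (∀ w, f (.inl w) ∈ A) ∧ ∃ e', (∀ v, e v = .inr (e' v)) ∧ RigidLabelling A σ (f ∘ .inr) e' := by
  refine ⟨fun w => (h.mem_or_exists _).resolve_right fun ⟨v, _, hv⟩ => ?_, ?_⟩
  · obtain ⟨x, hx⟩ := hinr v
    simp [← hx] at hv
  · exact h.restrict subset_rfl IsMor.inr.toIsEmb IsMor.id.toIsEmb hinr (fun _ v _ => ⟨v, rfl⟩)
      fun v _ _ => .inl ⟨v, rfl⟩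

theorem of_inl_inr {σ : Vertex (S.append T) → L} {f : Vertex (X.append Y) → L}
    {e : Vertex (S.append T) → Vertex (X.append Y)} (h : RigidLabelling A σ f e)
    (hinl : ∀ v, e (.inl v) ∈ Set.range (.inl : Vertex X → _))
    (hinr : ∀ v, e (.inr v) ∈ Set.range (.inr : Vertex Y → _)) :
    (∃ e', (∀ v, e (.inl v) = .inl (e' v)) ∧ RigidLabelling A (σ ∘ .inl) (f ∘ .inl) e') ∧
      ∃ e', RigidLabelling A (σ ∘ .inr) (f ∘ .inr) e' := by
  constructor
  · have mem_range : ∀ v w, .inl w ≤ e v ∨ e v ≤ .inl w → v ∈ Set.range (.inl : Vertex S → _) := by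
      rintro (_ | _ | v | v) w hvw
      · exact ⟨v, rfl⟩
      · obtain ⟨x, hx⟩ := hinr v
        simp [← hx] at hvw
    exact h.restrict subset_rfl IsMor.inl.toIsEmb IsMor.inl.toIsEmb hinl
      (fun w v hvw => mem_range v w (.inl hvw)) fun v w hvw => .inl (mem_range v w (.inr hvw))
  · have mem_range : ∀ v w, .inr w ≤ e v ∨ e v ≤ .inr w → v ∈ Set.range (.inr : Vertex T → _) := by
      rintro (_ | _ | v | v) w hvw
      · obtain ⟨x, hx⟩ := hinl v
        simp [← hx] at hvw
      · exact ⟨v, rfl⟩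
    obtain ⟨e', -, he'⟩ := h.restrict subset_rfl IsMor.inr.toIsEmb IsMor.inr.toIsEmb hinr
      (fun w v hvw => mem_range v w (.inl hvw)) fun v w hvw => .inl (mem_range v w (.inr hvw))
    exact ⟨e', he'⟩

theorem exists_withRootLetter {σ : Vertex d → L} {f : Vertex c → L} {e : Vertex d → Vertex c}
    {l : L} (h : RigidLabelling (insert l A) σ f e) :
    ∃ g : Vertex c → Option L, RigidLabelling (withRootLetter A) (some ∘ σ) g e ∧
      ∀ v, f v = (g v).getD l := by
  classical
  let IsKept w := f w ∈ A ∨ ∃ v, f w = σ v ∧ e v ≤ w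
  refine ⟨fun w => if IsKept w then some (f w) else none, ⟨h.isMor, fun v => ?_, fun w => ?_⟩,
    fun w => ?_⟩
  · have hv : IsKept (e v) := .inr ⟨v, h.apply_section v, le_rfl⟩
    simp [hv, h.apply_section]
  · by_cases hw : IsKept w
    · simp only [hw, if_true]
      exact hw.imp (fun hA => .inr ⟨_, hA, rfl⟩) fun ⟨v, hv, hvw⟩ => ⟨v, congrArg some hv, hvw⟩
    · simp only [hw, if_false]
      exact .inl (.inl rfl)
  · by_cases hw : IsKept w
    · simp [hw]
    · simp only [hw, if_false, Option.getD_none]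
      obtain (hl | hA) | hv := h.mem_or_exists w
      exacts [hl, absurd (.inl hA) hw, absurd (.inr hv) hw]

end RigidLabelling

/-! ### The position of the first root -/

section FirstRoot

variable {L : Type u} {A : Set L} {q r : Forest}

/-- The labellings rigid over `σ`, with a section sending `s` to `t`, in which the path below `t`
reads `w`. -/
def placedLabellings (A : Set L) (σ : Vertex S → L) (s : Vertex S) (t : Vertex T) (w : List L) :
    Set (Vertex T → L) :=
  {f | ∃ e, RigidLabelling A σ f e ∧ e s = t ∧ pathWord f t = w}

theorem IsRamsey.of_surjective {i : Vertex X → Vertex Y} (hi : IsEmb i)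
    (hs : Function.Surjective i) {𝒞 : Set (Set (Vertex X → L))} {𝒟 : Set (Set (Vertex Y → L))}
    (h : IsRamsey A 𝒞) (h𝒟 : ∀ D ∈ 𝒟, ∃ C ∈ 𝒞, ∀ f ∈ D, f ∘ i ∈ C) : IsRamsey A 𝒟 := by
  intro K _
  obtain ⟨U, hU⟩ := h K
  refine ⟨U, fun χ => ?_⟩
  obtain ⟨g, e, hg, hχ⟩ := hU χ
  refine ⟨_, _, hg.comp (.of_surjective A hi hs), fun D hD f hf f' hf' => ?_⟩
  obtain ⟨C, hC, hDC⟩ := h𝒟 D hD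
  rw [← subst_subst, ← subst_subst]
  exact hχ C hC _ (hDC f hf) _ (hDC f' hf')

theorem RigidLabelling.precomp_surjective {σ : Vertex S → L} {f : Vertex Y → L}
    {e : Vertex S → Vertex Y} (h : RigidLabelling A σ f e) {i : Vertex X → Vertex Y} (hi : IsEmb i)
    (hs : Function.Surjective i) :
    RigidLabelling A σ (f ∘ i) (Function.surjInv hs ∘ e) :=
  (IsParamWord.of_surjective A hi hs).subst h

theorem comp_mem_placedLabellings {σ : Vertex S → L} {s : Vertex S} {t : Vertex X} {w : List L}
    {i : Vertex X → Vertex Y} (hi : IsEmb i) (hs : Function.Surjective i) {f : Vertex Y → L}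
    (hf : f ∈ placedLabellings A σ s (i t) w) : f ∘ i ∈ placedLabellings A σ s t w := by
  obtain ⟨e, he, het, hw⟩ := hf
  refine ⟨_, he.precomp_surjective hi hs, ?_, ?_⟩
  · rw [Function.comp_apply, het, Function.leftInverse_surjInv ⟨hi.injective, hs⟩ t]
  · rw [← hw, pathWord, pathWord, hi.path_of_surjective hs, List.map_map]

namespace RigidLabelling

variable {σ : Vertex (d.tree.append q) → L} {f : Vertex (c.tree.append r) → L}
  {e : Vertex (d.tree.append q) → Vertex (c.tree.append r)}

/-- Two vertices of `c.tree.append r` in the left tree have a common lower bound, so a morphism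
sends the vertices right of the first tree to the right of `c.tree`. -/
theorem apply_inr_mem_range (h : RigidLabelling A σ f e) (v : Vertex q) :
    e (.inr v) ∈ Set.range .inr := by
  rcases hv : e (.inr v) with _ | _ | x | x
  · rcases hr : e (.inl .root) with _ | _ | y | y
    · obtain ⟨m, hm, hm', -⟩ := h.isMor.exists_meet (.inl .root) (.inr v) (.inl .root)
        (by simp [hr]) (by simp [hv])
      rcases m with _ | _ | m | m <;> simp at hm hm'
    · have := h.isMor.leftOf (.inl .root) (.inr v) trivial
      simp [hr, hv] at this
  · exact ⟨x, rfl⟩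

theorem apply_inl_mem_range_inl (h : RigidLabelling A σ f e) {x : Vertex (Forest.tree c)}
    (hx : e (.inl .root) = .inl x) (v : Vertex (Forest.tree d)) :
    e (.inl v) ∈ Set.range .inl := by
  have hle := (h.isMor.le_iff (.inl .root) (.inl v)).2 (root_le v)
  rcases hv : e (.inl v) with _ | _ | y | y
  · exact ⟨y, rfl⟩
  · simp [hx, hv] at hle

theorem apply_mem_range_inr (h : RigidLabelling A σ f e) {x : Vertex r}
    (hx : e (.inl .root) = .inr x) (v : Vertex (d.tree.append q)) :
    e v ∈ Set.range .inr := by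
  rcases v with _ | _ | v | v
  · have hle := (h.isMor.le_iff (.inl .root) (.inl v)).2 (root_le v)
    rcases hv : e (.inl v) with _ | _ | y | y
    · simp [hx, hv] at hle
    · exact ⟨y, rfl⟩
  · exact h.apply_inr_mem_range v

end RigidLabelling

theorem placedLabellings_inl_root (σ : Vertex (d.tree.append q) → L) (w : List L)
    {f : Vertex (c.tree.append r) → L} (hf : f ∈ placedLabellings A σ (inl root) (inl root) w) :
    f (inl root) = σ (inl root) ∧
      (∃ h ∈ rigidLabellings (withRootLetter A) (some ∘ σ ∘ inl ∘ child) c,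
        ∀ v, f (inl (child v)) = (h v).getD (σ (inl root))) ∧
      f ∘ inr ∈ rigidLabellings A (σ ∘ inr) r := by
  obtain ⟨e, he, hroot, -⟩ := hf
  obtain ⟨⟨e₁, he₁, hl⟩, hr⟩ :=
    he.of_inl_inr (he.apply_inl_mem_range_inl hroot) he.apply_inr_mem_range
  obtain ⟨e₂, he₂⟩ := hl.below_root (by simpa [hroot] using (he₁ root).symm)
  obtain ⟨h, hh, hf⟩ := he₂.exists_withRootLetter
  exact ⟨hroot ▸ he.apply_section _, ⟨h, ⟨e₂, hh⟩, hf⟩, hr⟩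

theorem placedLabellings_inl_child (σ : Vertex (d.tree.append q) → L) (t : Vertex c) (w : List L)
    {f : Vertex (c.tree.append r) → L}
    (hf : f ∈ placedLabellings A σ (inl root) (inl (child t)) w) :
    f (inl root) :: pathWord (f ∘ inl ∘ child) t = w ∧
      some ∘ f ∘ inl ∘ child ∈ placedLabellings (withRootLetter A)
        (some ∘ σ ∘ inl ∘ removeNil) (inl root) t (w.tail.map some) ∧
      f ∘ inr ∈ rigidLabellings A (σ ∘ inr) r := by
  obtain ⟨e, he, hroot, rfl⟩ := hf
  obtain ⟨⟨e₁, he₁, hl⟩, hr⟩ :=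
    he.of_inl_inr (he.apply_inl_mem_range_inl hroot) he.apply_inr_mem_range
  have he₁root : e₁ root = child t := by simpa [hroot] using (he₁ root).symm
  obtain ⟨-, e₂, he₂, hl₂⟩ := hl.of_ne_root fun v hv => by
    simpa [he₁root, hv] using (hl.isMor.le_iff root v).2 (root_le v)
  have hsome : Set.MapsTo some A (withRootLetter A) := fun a ha => .inr ⟨a, ha, rfl⟩
  refine ⟨by simp [Function.comp_assoc], ⟨_, (hl₂.map hsome).comp_surjective isEmb_removeNil
    removeNil_surjective, ?_, ?_⟩, hr⟩
  · exact child.inj ((he₂ root).symm.trans he₁root)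
  · simp [pathWord_comp, Function.comp_assoc]

theorem placedLabellings_inr (σ : Vertex (d.tree.append q) → L) (t : Vertex r) (w : List L)
    {f : Vertex (c.tree.append r) → L} (hf : f ∈ placedLabellings A σ (inl root) (inr t) w) :
    (∀ v, f (inl v) ∈ A) ∧ f ∘ inr ∈ placedLabellings A σ (inl root) t w := by
  obtain ⟨e, he, hroot, rfl⟩ := hf
  obtain ⟨hA, e', he', hr⟩ := he.of_mem_range_inr (he.apply_mem_range_inr hroot)
  exact ⟨hA, e', hr, inr.inj ((he' _).symm.trans hroot), by simp⟩

theorem isRamsey_placedLabellings (hd : DualRamsey.{u} d) (hq : DualRamsey.{u} q) (T : Forest)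
    (hA : A.Nonempty) [Finite L] (σ : Vertex (d.tree.append q) → L) :
    IsRamsey A {C | ∃ (t : Vertex T) (w : List L), C = placedLabellings A σ (inl root) t w} := by
  induction T using induction_tree_append generalizing L q with
  | nil => exact isRamsey_of_isEmpty _
  | of_surjective X Y i hi hs ih =>
    refine (ih hq hA σ).of_surjective hi hs ?_
    rintro _ ⟨t, w, rfl⟩
    obtain ⟨t, rfl⟩ := hs t
    exact ⟨_, ⟨t, w, rfl⟩, fun f hf => comp_mem_placedLabellings hi hs hf⟩
  | tree_append c r ihc ihr =>
    have hA' : (withRootLetter A).Nonempty := ⟨none, .inl rfl⟩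
    have hleft := (((ihc dualRamsey_nil hA' (some ∘ σ ∘ inl ∘ removeNil)).insert
      (hd _ _ hA' (some ∘ σ ∘ inl ∘ child))).tree).insert (dualRamsey_nil L A hA isEmptyElim)
    have hright := (ihr hq hA σ).insert (hq L A hA (σ ∘ inr))
    refine (hleft.append hright).refine ?_
    rintro _ ⟨_ | _ | (_ | t) | t, w, rfl⟩ ⟨f₀, hf₀⟩
    · exact ⟨_, ⟨_, .inr ⟨σ (inl root), trivial, _, .inl rfl, rfl⟩, _, .inl rfl, rfl⟩, fun f hf =>
        have ⟨hroot, hl, hr⟩ := placedLabellings_inl_root σ w hf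
        ⟨⟨hroot, hl⟩, hr⟩⟩
    · refine ⟨_, ⟨_, .inr ⟨f₀ (inl root), trivial, _, .inr ⟨t, w.tail.map some, rfl⟩, rfl⟩, _,
        .inl rfl, rfl⟩, fun f hf => ?_⟩
      obtain ⟨hw, hl, hr⟩ := placedLabellings_inl_child σ t w hf
      have hw₀ := (placedLabellings_inl_child σ t w hf₀).1
      exact ⟨⟨(List.cons.inj (hw.trans hw₀.symm)).1, _, hl, fun _ => rfl⟩, hr⟩
    · exact ⟨_, ⟨_, .inl rfl, _, .inr ⟨t, w, rfl⟩, rfl⟩, fun f hf =>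
        have ⟨hl, hr⟩ := placedLabellings_inr σ t w hf
        ⟨⟨isEmptyElim, .of_isEmpty hl _⟩, hr⟩⟩

end FirstRoot

/-! ### Colourings of vertices -/

/-- For every partition of the vertices of `U` into two sets, `S` embeds into the first or `T` into
the second. -/
def VertexArrow (U S T : Forest) : Prop :=
  ∀ ψ : Vertex U → Prop, (∃ e : Vertex S → Vertex U, IsMor e ∧ ∀ v, ψ (e v)) ∨
    ∃ e : Vertex T → Vertex U, IsMor e ∧ ∀ v, ¬ ψ (e v)

namespace VertexArrow

theorem symm (h : VertexArrow U S T) : VertexArrow U T S := by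
  intro ψ
  simpa only [not_not] using (h fun v => ¬ ψ v).symm

theorem nil_left : VertexArrow nil nil T :=
  fun _ => .inl ⟨isEmptyElim, .of_isEmpty _, isEmptyElim⟩

theorem append_left (hX : VertexArrow X S U) (hY : VertexArrow Y T U) :
    VertexArrow (X.append Y) (S.append T) U := by
  intro ψ
  obtain ⟨e, he, hψ⟩ | ⟨e, he, hψ⟩ := hX (ψ ∘ inl)
  · obtain ⟨e', he', hψ'⟩ | ⟨e', he', hψ'⟩ := hY (ψ ∘ inr)
    · refine .inl ⟨_, he.append he', ?_⟩
      rintro (_ | _ | v | v)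
      exacts [hψ v, hψ' v]
    · exact .inr ⟨_, IsMor.inr.comp he', hψ'⟩
  · exact .inr ⟨_, IsMor.inl.comp he, hψ⟩

theorem tree (hX : VertexArrow X c d.tree) (hY : VertexArrow Y c.tree d) :
    VertexArrow (X.append Y).tree c.tree d.tree := by
  intro ψ
  by_cases hroot : ψ root
  · obtain ⟨e, he, hψ⟩ | ⟨e, he, hψ⟩ := hX (ψ ∘ child ∘ inl)
    · refine .inl ⟨_, (IsMor.inl.comp he).tree, ?_⟩
      rintro (_ | v)
      exacts [hroot, hψ v]
    · exact .inr ⟨_, (IsMor.inl.comp he).child_comp, hψ⟩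
  · obtain ⟨e, he, hψ⟩ | ⟨e, he, hψ⟩ := hY (ψ ∘ child ∘ inr)
    · exact .inl ⟨_, (IsMor.inr.comp he).child_comp, hψ⟩
    · refine .inr ⟨_, (IsMor.inr.comp he).tree, ?_⟩
      rintro (_ | v)
      exacts [hroot, hψ v]

end VertexArrow

theorem exists_vertexArrow (S T : Forest) : ∃ U, VertexArrow U S T := by
  induction S generalizing T with
  | nil => exact ⟨nil, .nil_left⟩
  | append S₁ S₂ ih₁ ih₂ =>
    obtain ⟨X, hX⟩ := ih₁ T
    obtain ⟨Y, hY⟩ := ih₂ T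
    exact ⟨_, hX.append_left hY⟩
  | tree c ihc =>
    induction T with
    | nil => exact ⟨nil, .symm .nil_left⟩
    | append T₁ T₂ ih₁ ih₂ =>
      obtain ⟨X, hX⟩ := ih₁
      obtain ⟨Y, hY⟩ := ih₂
      exact ⟨_, (hX.symm.append_left hY.symm).symm⟩
    | tree d ihd =>
      obtain ⟨X, hX⟩ := ihc d.tree
      obtain ⟨Y, hY⟩ := ihd
      exact ⟨_, hX.tree hY⟩

theorem exists_mono_isMor (K : Type*) [Finite K] (T : Forest) :
    ∃ U, ∀ ψ : Vertex U → K, ∃ e : Vertex T → Vertex U, IsMor e ∧ ∀ v w, ψ (e v) = ψ (e w) := by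
  induction K using Finite.induction_empty_option with
  | of_equiv i ih =>
    obtain ⟨U, hU⟩ := ih
    exact ⟨U, fun ψ => by simpa using hU (i.symm ∘ ψ)⟩
  | h_empty => exact ⟨nil.tree, fun ψ => (ψ root).elim⟩
  | h_option ih =>
    obtain ⟨U, hU⟩ := ih
    obtain ⟨W, hW⟩ := exists_vertexArrow T U
    refine ⟨W, fun ψ => ?_⟩
    obtain ⟨e, he, hψ⟩ | ⟨e, he, hψ⟩ := hW fun v => ψ v = none
    · exact ⟨e, he, fun v w => (hψ v).trans (hψ w).symm⟩
    · choose ψ' hψ' using fun v => Option.ne_none_iff_exists.1 (hψ v)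
      obtain ⟨e', he', hmono⟩ := hU ψ'
      exact ⟨_, he.comp he', fun v w => by simp [← hψ', hmono v w]⟩

/-! ### Towers -/

/-- The juxtaposition of `m` copies of `Y`. -/
def copies : ℕ → Forest → Forest
  | 0, _ => nil
  | m + 1, Y => Y.append (copies m Y)

instance : IsEmpty (Vertex (copies 0 Y)) := inferInstanceAs (IsEmpty (Vertex nil))

/-- The function on `copies m Y` given by `π` on each copy. -/
def copiesElim {α : Type*} (π : Vertex Y → α) : (m : ℕ) → Vertex (copies m Y) → α
  | 0 => isEmptyElim
  | m + 1 => appendElim π (copiesElim π m)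

/-- The regular tower of height `n` with branching number `k` and with a copy of `c` on top of each
branch. -/
def tower (k : ℕ) (c : Forest) : ℕ → Forest
  | 0 => c
  | n + 1 => tree (copies k (tower k c n))

/-- Sends the vertices of the copies of `c` on top of a tower to the corresponding vertices of
`c`. -/
def towerTop (k : ℕ) (c : Forest) : (n : ℕ) → Vertex (tower k c n) → Option (Vertex c)
  | 0 => some
  | n + 1 => treeElim none (copiesElim (towerTop k c n) k)

section Line

variable {M : Type*} {B : Set M} {b : M}

/-- `Y` carries a labelling rigid over `σ`, with a section which lifts `i` along `π` and has paths
starting with `w`. -/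
def LiftsWithPrefix (B : Set M) (π : Vertex Y → Option (Vertex c)) (w : List M) (σ : Vertex T → M)
    (i : Vertex T → Vertex c) : Prop :=
  ∃ (g : Vertex Y → M) (e : Vertex T → Vertex Y), RigidLabelling B σ g e ∧
    ∀ v, π (e v) = some (i v) ∧ w <+: pathWord g (e v)

theorem exists_liftsWithPrefix_copies (B : Set M) (c T : Forest) :
    ∃ k, ∀ (Y : Forest) (π : Vertex Y → Option (Vertex c)) (w : List M),
      (∀ d (σ : Vertex (tree d) → M) i, IsMor i → LiftsWithPrefix B π w σ i) →
      ∀ (σ : Vertex T → M) i, IsMor i → LiftsWithPrefix B (copiesElim π k) w σ i := by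
  induction T using induction_tree_append with
  | nil =>
    exact ⟨0, fun Y π w _ σ i _ =>
      ⟨isEmptyElim, isEmptyElim, .of_isEmpty isEmptyElim _, isEmptyElim⟩⟩
  | tree_append d T _ ih =>
    obtain ⟨k, hk⟩ := ih
    refine ⟨k + 1, fun Y π w hY σ i hi => ?_⟩
    obtain ⟨g, e, hg, hw⟩ := hY d (σ ∘ inl) _ (hi.comp .inl)
    obtain ⟨g', e', hg', hw'⟩ := hk Y π w hY (σ ∘ inr) _ (hi.comp .inr)
    refine ⟨appendElim g g', _, .append hg hg', ?_⟩
    rintro (_ | _ | v | v)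
    · exact ⟨(hw v).1, (pathWord_inl (appendElim g g') (e v)).symm ▸ (hw v).2⟩
    · exact ⟨(hw' v).1, (pathWord_inr (appendElim g g') (e' v)).symm ▸ (hw' v).2⟩
  | of_surjective X T j hj hs ih =>
    obtain ⟨k, hk⟩ := ih
    refine ⟨k, fun Y π w hY σ i hi => ?_⟩
    obtain ⟨g, e, hg, hw⟩ := hk Y π w hY (σ ∘ j) _ (hi.comp (hj.isMor_of_surjective hs))
    have hsection : j ∘ Function.surjInv hs = id := funext (Function.surjInv_eq hs)
    refine ⟨g, e ∘ Function.surjInv hs, ?_, fun v => ?_⟩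
    · simpa [Function.comp_assoc, hsection] using hg.comp_surjective (hj.isMor_surjInv hs).toIsEmb
        (Function.leftInverse_surjInv ⟨hj.injective, hs⟩).surjective
    · simpa [Function.surjInv_eq hs v] using hw (Function.surjInv hs v)

theorem liftsWithPrefix_tower (hb : b ∈ B) (k : ℕ) {n : ℕ} {w : List M} (hw : ∀ a ∈ w, a ∈ B)
    (hn : w.length = n) (σ : Vertex (tree d) → M) {i : Vertex (tree d) → Vertex c} (hi : IsMor i) :
    LiftsWithPrefix B (towerTop (k + 1) c n) w σ i := by
  subst hn
  induction w with
  | nil => exact ⟨_, _, .of_isMor hi σ hb, fun v => ⟨rfl, List.nil_prefix⟩⟩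
  | cons a w ih =>
    obtain ⟨ha, hw⟩ := List.forall_mem_cons.1 hw
    obtain ⟨g, e, hg, hgw⟩ := ih hw
    refine ⟨treeElim a (appendElim g fun _ => b), _, .child (.inl hg fun _ => hb) ha, fun v =>
      ⟨(hgw v).1, ?_⟩⟩
    change a :: w <+: pathWord (treeElim a (appendElim g _)) (child (inl (e v)))
    simpa using (hgw v).2

theorem exists_rigidLabelling_tower (hb : b ∈ B) (τ : Vertex (tree c) → M) :
    ∃ k, ∀ (n : ℕ) (w : List M), (∀ a ∈ w, a ∈ B ∨ a = τ root) → τ root ∈ w → w.length = n →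
      ∃ (g : Vertex (tower (k + 1) c n) → M) (e : Vertex (tree c) → Vertex (tower (k + 1) c n)),
        RigidLabelling B τ g e ∧
          ∀ t, towerTop (k + 1) c n (e (child t)) = some t ∧ w <+: pathWord g (e (child t)) := by
  obtain ⟨k, hk⟩ := exists_liftsWithPrefix_copies (insert (τ root) B) c c
  refine ⟨k, fun n w hw hroot hn => ?_⟩
  subst hn
  induction w with
  | nil => simp at hroot
  | cons a w ih =>
    obtain ⟨ha, hw⟩ := List.forall_mem_cons.1 hw
    by_cases haτ : a = τ root
    · obtain ⟨g, e, hg, hgw⟩ := hk _ (towerTop (k + 1) c w.length) w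
        (fun d σ i hi => liftsWithPrefix_tower (.inr hb) k (fun x hx => (hw x hx).symm) rfl σ hi)
        (τ ∘ child) _ .id
      refine ⟨treeElim a (appendElim (fun _ => b) g), _, .tree (.inr hg fun _ => .inr hb) haτ,
        fun t => ⟨(hgw t).1, ?_⟩⟩
      change a :: w <+: pathWord (treeElim a (appendElim _ g)) (child (inr (e t)))
      simpa using (hgw t).2
    · obtain ⟨g, e, hg, hgw⟩ := ih hw ((List.mem_cons.1 hroot).resolve_left (Ne.symm haτ))
      refine ⟨treeElim a (appendElim g fun _ => b), _,
        .child (.inl hg fun _ => hb) (ha.resolve_right haτ), fun t => ⟨(hgw t).1, ?_⟩⟩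
      change a :: w <+: pathWord (treeElim a (appendElim g _)) (child (inl (e (child t))))
      simpa using (hgw t).2

end Line

/-! ### Colourings of paths -/

section PathColouring

variable {L : Type u} {A : Set L} {a₀ : L} {K : Type u} {W : Forest} {j : ℕ}

theorem pathWord_subst_congr {g : Vertex U → Vertex T ⊕ L} {e : Vertex T → Vertex U}
    (hg : IsParamWord A g e) {f f' : Vertex T → L} {t : Vertex T} (hf : ∀ s < t, f s = f' s) :
    pathWord (subst f g) (e t) = pathWord (subst f' g) (e t) := by
  refine pathWord_congr fun u hu => ?_
  obtain ⟨a, -, ha⟩ | ⟨s, hs, hsu⟩ := hg.mem_or_exists u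
  · simp [subst, ← ha]
  · have hst : s < t := by
      simpa [lt_iff_le_not_ge, hg.isMor.le_iff] using hsu.trans_lt hu
    simp [subst, hs, hf s hst]

/-- For every finite colouring of the pairs of a vertex and a word there is a copy of `T` in which
the colour of a vertex, paired with the path below it, does not depend on the letters substituted
for the parameters. -/
def PathRamsey (A : Set L) (T : Forest) : Prop :=
  ∀ (K : Type u) [Finite K], ∃ U, ∀ Φ : Vertex U → List L → K,
    ∃ (g : Vertex U → Vertex T ⊕ L) (e : Vertex T → Vertex U), IsParamWord A g e ∧
      ∀ f f' : Vertex T → L, (∀ v, f v ∈ A) → (∀ v, f' v ∈ A) → ∀ t,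
        Φ (e t) (pathWord (subst f g) (e t)) = Φ (e t) (pathWord (subst f' g) (e t))

/-- A copy of `T` in which the colour `Φ` of a vertex above `t`, paired with the path below it, is
determined by `t` and by the first `j` letters of the path in `T`. -/
def UniformCopy (A : Set L) (Φ : Vertex W → List L → K) (π : Vertex T → Option (Vertex c))
    (ρ : Vertex c → List.Vector L j → K) : Prop :=
  ∃ (g : Vertex W → Vertex T ⊕ L) (e : Vertex T → Vertex W), IsParamWord A g e ∧
    ∀ f : Vertex T → L, (∀ v, f v ∈ A) → ∀ v t, π v = some t →
      ∀ x : List.Vector L j, x.1 <+: pathWord f v → Φ (e v) (pathWord (subst f g) (e v)) = ρ t x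

namespace UniformCopy

theorem of_isEmpty [IsEmpty (Vertex T)] (ha₀ : a₀ ∈ A) (Φ : Vertex W → List L → K)
    (π : Vertex T → Option (Vertex c)) (ρ : Vertex c → List.Vector L j → K) :
    UniformCopy A Φ π ρ :=
  ⟨fun _ => .inr a₀, isEmptyElim, .of_isEmpty (fun _ => Set.mem_image_of_mem _ ha₀) _,
    fun _ _ => isEmptyElim⟩

theorem append {Φ : Vertex (X.append Y) → List L → K} {π₁ : Vertex S → Option (Vertex c)}
    {π₂ : Vertex T → Option (Vertex c)} {ρ : Vertex c → List.Vector L j → K}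
    (h₁ : UniformCopy A (Φ ∘ .inl) π₁ ρ) (h₂ : UniformCopy A (Φ ∘ .inr) π₂ ρ) :
    UniformCopy A Φ (appendElim π₁ π₂) ρ := by
  obtain ⟨g₁, e₁, hg₁, hρ₁⟩ := h₁
  obtain ⟨g₂, e₂, hg₂, hρ₂⟩ := h₂
  refine ⟨_, _, hg₁.append hg₂, fun f hf => ?_⟩
  rw [subst_paramAppend]
  rintro (_ | _ | v | v) t hv x hx
  · simpa using hρ₁ (f ∘ .inl) (fun _ => hf _) v t hv x (by simpa using hx)
  · simpa using hρ₂ (f ∘ .inr) (fun _ => hf _) v t hv x (by simpa using hx)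

theorem inr {Φ : Vertex (X.append Y) → List L → K} {π : Vertex T → Option (Vertex c)}
    {ρ : Vertex c → List.Vector L j → K} (ha₀ : a₀ ∈ A) (h : UniformCopy A (Φ ∘ .inr) π ρ) :
    UniformCopy A Φ π ρ := by
  obtain ⟨g, e, hg, hρ⟩ := h
  refine ⟨appendElim (fun _ => .inr a₀) g, _, .inr hg fun _ => ⟨a₀, ha₀, rfl⟩,
    fun f hf v t hv x hx => ?_⟩
  rw [Function.comp_apply, pathWord_inr]
  exact hρ f hf v t hv x hx

theorem tree {Φ : Vertex (Forest.tree W) → List L → K} {π : Vertex T → Option (Vertex c)}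
    {ρ : Vertex c → List.Vector L j → L → K}
    (h : UniformCopy A (fun v w l => Φ (.child v) (l :: w)) π ρ) :
    UniformCopy A Φ (treeElim none π) fun t (x : List.Vector L (j + 1)) => ρ t x.tail x.head := by
  obtain ⟨g, e, hg, hρ⟩ := h
  have hg' : IsParamWord A (treeElim (.inl .root) (Sum.map .child id ∘ g))
      (treeElim .root (.child ∘ e)) :=
    RigidLabelling.tree ((hg.map (mapsTo_sumMap_letters .child)).mono (Set.subset_insert _ _)) rfl
  refine ⟨_, _, hg', fun f hf => ?_⟩
  have hsubst : subst f (treeElim (.inl .root) (Sum.map .child id ∘ g)) =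
      treeElim (f .root) (subst (f ∘ .child) g) := by
    funext w
    rcases w with _ | w
    · rfl
    · simp only [subst, Function.comp_apply, treeElim_child]
      cases g w <;> rfl
  rw [hsubst]
  rintro (_ | v) t hv ⟨_ | ⟨l, x⟩, hlen⟩ hx
  · cases hv
  · cases hv
  · cases hlen
  · rw [pathWord_child, List.cons_prefix_cons] at hx
    obtain ⟨rfl, hx⟩ := hx
    have hcolor := hρ (f ∘ .child) (fun _ => hf _) v t hv ⟨x, Nat.succ.inj hlen⟩ hx
    simpa [List.Vector.tail, List.Vector.head] using congrFun hcolor (f .root)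

end UniformCopy

open Classical in
theorem exists_list_uniformCopy (ha₀ : a₀ ∈ A) {π : Vertex T → Option (Vertex c)}
    (hW : ∀ Φ : Vertex W → List L → K,
      ∃ ρ : Vertex c → List.Vector L j → K, UniformCopy A Φ π ρ)
    (M : ℕ) (Φ : Vertex (copies M W) → List L → K) :
    ∃ l : List (Vertex c → List.Vector L j → K), l.length = M ∧
      ∀ ρ m, m ≤ l.count ρ → UniformCopy A Φ (copiesElim π m) ρ := by
  induction M with
  | zero =>
    refine ⟨[], rfl, fun ρ m hm => ?_⟩
    obtain rfl : m = 0 := by simpa using hm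
    exact .of_isEmpty ha₀ _ _ _
  | succ M ih =>
    obtain ⟨l, hl, hcount⟩ := ih (Φ ∘ inr)
    obtain ⟨ρ₀, hρ₀⟩ := hW (Φ ∘ inl)
    refine ⟨ρ₀ :: l, congrArg (· + 1) hl, fun ρ m hm => ?_⟩
    by_cases hml : m ≤ l.count ρ
    · exact .inr ha₀ (hcount ρ m hml)
    · obtain rfl : ρ₀ = ρ := by
        by_contra hne
        exact hml (by simpa [hne] using hm)
      obtain ⟨m, rfl⟩ : ∃ m', m = m' + 1 := Nat.exists_eq_succ_of_ne_zero (by omega)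
      exact hρ₀.append (hcount ρ₀ m (by simpa [List.count_cons] using hm))

theorem exists_uniformCopy_copies [Finite L] [Finite K] (ha₀ : a₀ ∈ A)
    {π : Vertex T → Option (Vertex c)}
    (hW : ∀ Φ : Vertex W → List L → K,
      ∃ ρ : Vertex c → List.Vector L j → K, UniformCopy A Φ π ρ) (k : ℕ) :
    ∃ M, ∀ Φ : Vertex (copies M W) → List L → K,
      ∃ ρ : Vertex c → List.Vector L j → K, UniformCopy A Φ (copiesElim π k) ρ := by
  classical
  have := Fintype.ofFinite L
  have := Fintype.ofFinite (Vertex c → List.Vector L j → K)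
  refine ⟨Fintype.card (Vertex c → List.Vector L j → K) * k + 1, fun Φ => ?_⟩
  obtain ⟨l, hl, hcount⟩ := exists_list_uniformCopy ha₀ hW _ Φ
  obtain ⟨ρ, -, hρ⟩ : ∃ ρ ∈ Finset.univ, k < l.count ρ := by
    refine Finset.exists_lt_of_sum_lt ?_
    have hcard : ∑ ρ, l.count ρ = l.length :=
      (Finset.sum_subset (Finset.subset_univ l.toFinset) fun ρ _ hρ =>
        List.count_eq_zero.2 (by simpa using hρ)).symm.trans (List.sum_toFinset_count_eq_length l)
    simp [hcard, hl]
  exact ⟨ρ, hcount ρ k hρ.le⟩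

theorem PathRamsey.exists_uniformCopy_tower [Finite L] (ha₀ : a₀ ∈ A) (hc : PathRamsey A c)
    (k j : ℕ) (K : Type u) [Finite K] :
    ∃ W, ∀ Φ : Vertex W → List L → K,
      ∃ ρ : Vertex c → List.Vector L j → K, UniformCopy A Φ (towerTop k c j) ρ := by
  induction j generalizing K with
  | zero =>
    obtain ⟨W, hW⟩ := hc K
    refine ⟨W, fun Φ => ?_⟩
    obtain ⟨g, e, hg, hΦ⟩ := hW Φ
    refine ⟨fun t _ => Φ (e t) (pathWord (subst (fun _ => a₀) g) (e t)), g, e, hg, ?_⟩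
    rintro f hf v _ ⟨⟩ - -
    exact hΦ f _ hf (fun _ => ha₀) v
  | succ j ih =>
    obtain ⟨W, hW⟩ := ih (L → K)
    obtain ⟨M, hM⟩ := exists_uniformCopy_copies ha₀ hW k
    refine ⟨tree (copies M W), fun Φ => ?_⟩
    obtain ⟨ρ, hρ⟩ := hM fun v w l => Φ (child v) (l :: w)
    exact ⟨_, hρ.tree⟩

namespace PathRamsey

theorem nil : PathRamsey A nil :=
  fun _ _ => ⟨Forest.nil, fun _ => ⟨isEmptyElim, isEmptyElim, .of_isEmpty isEmptyElim _,
    fun _ _ _ _ => isEmptyElim⟩⟩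

theorem append (hS : PathRamsey A S) (hT : PathRamsey A T) : PathRamsey A (S.append T) := by
  intro K _
  obtain ⟨X, hX⟩ := hS K
  obtain ⟨Y, hY⟩ := hT K
  refine ⟨X.append Y, fun Φ => ?_⟩
  obtain ⟨g₁, e₁, hg₁, hΦ₁⟩ := hX (Φ ∘ inl)
  obtain ⟨g₂, e₂, hg₂, hΦ₂⟩ := hY (Φ ∘ inr)
  refine ⟨_, _, hg₁.append hg₂, fun f f' hf hf' => ?_⟩
  rw [subst_paramAppend, subst_paramAppend]
  rintro (_ | _ | t | t)
  · simpa using hΦ₁ (f ∘ inl) (f' ∘ inl) (fun _ => hf _) (fun _ => hf' _) t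
  · simpa using hΦ₂ (f ∘ inr) (f' ∘ inr) (fun _ => hf _) (fun _ => hf' _) t

theorem tree [Finite L] (ha₀ : a₀ ∈ A) (hc : PathRamsey A c) : PathRamsey A (Forest.tree c) := by
  classical
  intro K _
  obtain ⟨k, hk⟩ := exists_rigidLabelling_tower (B := (Sum.inr '' A : Set (Vertex c.tree ⊕ L)))
    ⟨a₀, ha₀, rfl⟩ (c := c) .inl
  obtain ⟨n, hn⟩ := exists_mono_variable_word A (Vertex c → Option K)
  obtain ⟨W, hW⟩ := hc.exists_uniformCopy_tower ha₀ (k + 1) n K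
  refine ⟨W, fun Φ => ?_⟩
  obtain ⟨ρ, g₁, e₁, hg₁, hρ⟩ := hW Φ
  obtain ⟨w, rfl, hw_none, hwA, hw⟩ :=
    hn fun l t => if hl : l.length = n then some (ρ t ⟨l, hl⟩) else none
  obtain ⟨g₂, e₂, hg₂, hpath⟩ := hk w.length (w.map (Option.elim · (.inl root) .inr)) (by
    rintro _ hx
    obtain ⟨_ | a, ha, rfl⟩ := List.mem_map.1 hx
    exacts [.inr rfl, .inl ⟨a, hwA a ha, rfl⟩]) (List.mem_map.2 ⟨none, hw_none, rfl⟩)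
    (List.length_map _)
  have hcolor : ∀ f : Vertex c.tree → L, (∀ v, f v ∈ A) → ∀ t,
      Φ (e₁ (e₂ (child t))) (pathWord (subst (subst f g₂) g₁) (e₁ (e₂ (child t)))) =
        ρ t ⟨w.map (·.getD (f root)), List.length_map _⟩ := by
    intro f hf t
    refine hρ _ (IsParamWord.subst_mem hg₂ hf) _ t (hpath t).1 _ ?_
    have hprefix := (hpath t).2.map (Sum.elim f id)
    rw [List.map_map] at hprefix
    rw [subst, pathWord_comp]
    convert hprefix using 2
    funext x
    cases x <;> rfl
  refine ⟨_, _, IsParamWord.comp hg₁ hg₂, fun f f' hf hf' => ?_⟩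
  rintro (_ | t)
  · rw [pathWord_subst_congr (IsParamWord.comp hg₁ hg₂) fun s hs => absurd hs (root_le s).not_gt]
  · rw [← subst_subst, ← subst_subst]
    have := congrFun (hw _ (hf root) _ (hf' root)) t
    simp only [List.length_map, dite_true, Option.some.injEq] at this
    exact (hcolor f hf t).trans (this.trans (hcolor f' hf' t).symm)

end PathRamsey

theorem pathRamsey [Finite L] (hA : A.Nonempty) (T : Forest) : PathRamsey A T := by
  obtain ⟨a₀, ha₀⟩ := hA
  induction T with
  | nil => exact .nil
  | tree c ih => exact ih.tree ha₀
  | append X Y ihX ihY => exact ihX.append ihY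

theorem exists_constant_path_color [Finite L] (hA : A.Nonempty) (T : Forest) (K : Type u)
    [Finite K] :
    ∃ U, ∀ Φ : Vertex U → List L → K,
      ∃ (g : Vertex U → Vertex T ⊕ L) (e : Vertex T → Vertex U), IsParamWord A g e ∧
        ∀ f f' : Vertex T → L, (∀ v, f v ∈ A) → (∀ v, f' v ∈ A) → ∀ t t',
          Φ (e t) (pathWord (subst f g) (e t)) = Φ (e t') (pathWord (subst f' g) (e t')) := by
  obtain ⟨a₀, ha₀⟩ := hA
  obtain ⟨U₁, hU₁⟩ := exists_mono_isMor K T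
  obtain ⟨U₂, hU₂⟩ := pathRamsey ⟨a₀, ha₀⟩ U₁ K
  refine ⟨U₂, fun Φ => ?_⟩
  obtain ⟨g₂, e₂, hg₂, hΦ⟩ := hU₂ Φ
  obtain ⟨e₁, he₁, hmono⟩ := hU₁ fun t => Φ (e₂ t) (pathWord (subst (fun _ => a₀) g₂) (e₂ t))
  have hg₁ : IsParamWord A _ e₁ := RigidLabelling.of_isMor he₁ Sum.inl ⟨a₀, ha₀, rfl⟩
  refine ⟨_, _, hg₂.comp hg₁, fun f f' hf hf' t t' => ?_⟩
  rw [← subst_subst, ← subst_subst]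
  exact (hΦ _ _ (hg₁.subst_mem hf) (fun _ => ha₀) _).trans ((hmono t t').trans
    (hΦ _ _ (fun _ => ha₀) (hg₁.subst_mem hf') _))

end PathColouring

/-! ### The dual Ramsey theorem for forests -/

section DualRamsey

variable {L : Type u} {A : Set L} {d q : Forest}

theorem RigidLabelling.apply_mem_of_lt {σ : Vertex (d.tree.append q) → L} {f : Vertex T → L}
    {e : Vertex (d.tree.append q) → Vertex T} (h : RigidLabelling A σ f e) {t : Vertex T}
    (ht : t < e (.inl .root)) : f t ∈ A := by
  refine (h.mem_or_exists t).resolve_right fun ⟨v, _, hv⟩ => ?_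
  have hroot : v < .inl .root := by
    simpa [lt_iff_le_not_ge, h.isMor.le_iff] using hv.trans_lt ht
  rcases v with _ | _ | (_ | v) | v <;> simp [lt_iff_le_not_ge] at hroot

theorem dualRamsey_tree_append (hd : DualRamsey.{u} d) (hq : DualRamsey.{u} q) :
    DualRamsey.{u} (d.tree.append q) := by
  classical
  intro L _ A hA σ T K _
  obtain ⟨a₀, ha₀⟩ := hA
  have : Nonempty L := ⟨a₀⟩
  obtain ⟨T', hT'⟩ := exists_constant_path_color ⟨a₀, ha₀⟩ T K
  obtain ⟨U, hU⟩ := (isRamsey_placedLabellings hd hq T' ⟨a₀, ha₀⟩ σ).exists_color K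
  refine ⟨U, fun χ => ?_⟩
  obtain ⟨g₁, e₁, ρ, hg₁, hρ⟩ := hU χ
  obtain ⟨g₂, e₂, hg₂, hconst⟩ := hT' fun t w => ρ (placedLabellings A σ (inl root) t w)
  have hcolor : ∀ f e, RigidLabelling A σ f e → ∃ f' : Vertex T → L, (∀ v, f' v ∈ A) ∧
      χ (subst (subst f g₂) g₁) = ρ (placedLabellings A σ (inl root) (e₂ (e (inl root)))
        (pathWord (subst f' g₂) (e₂ (e (inl root))))) := by
    intro f e he
    refine ⟨fun t => if f t ∈ A then f t else a₀, fun t => ?_, ?_⟩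
    · dsimp only
      split_ifs <;> assumption
    · rw [← pathWord_subst_congr hg₂ fun t ht => (if_pos (he.apply_mem_of_lt ht)).symm]
      exact hρ _ ⟨_, _, rfl⟩ _ ⟨_, hg₂.subst he, rfl, rfl⟩
  refine ⟨_, _, hg₁.comp hg₂, ?_⟩
  rintro _ rfl f ⟨e, he⟩ f' ⟨e', he'⟩
  obtain ⟨h, hA, hh⟩ := hcolor f e he
  obtain ⟨h', hA', hh'⟩ := hcolor f' e' he'
  rw [← subst_subst, ← subst_subst, hh, hh']
  exact hconst h h' hA hA' _ _

theorem dualRamsey (S : Forest) : DualRamsey.{u} S := by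
  induction S using induction_tree_append with
  | nil => exact dualRamsey_nil
  | tree_append d q hd hq => exact dualRamsey_tree_append hd hq
  | of_surjective X Y i hi hs ih =>
    intro L _ A hA σ T
    refine (ih L A hA (σ ∘ i) T).refine ?_
    rintro _ rfl -
    exact ⟨_, rfl, fun f ⟨e, he⟩ => ⟨_, he.comp_surjective hi hs⟩⟩

end DualRamsey

/-- The rigid surjections between the trees `tree c` and `tree d`. -/
def IsRigid (f : Vertex (tree c) → Vertex (tree d)) : Prop :=
  ∃ e, RigidLabelling ∅ id f e ∧ e .root = .root

/-- Extends a parameter word of `t` by a root, which is also substituted for all its letters. -/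
def rootedWord {L : Type*} (g : Vertex c → Vertex d ⊕ L) : Vertex (tree c) → Vertex (tree d) :=
  treeElim .root (Sum.elim child (fun _ => .root) ∘ g)

theorem IsParamWord.isRigid_rootedWord {L : Type*} {A : Set L} {g : Vertex c → Vertex d ⊕ L}
    {e : Vertex d → Vertex c} (hg : IsParamWord A g e) : IsRigid (rootedWord g) := by
  refine ⟨_, RigidLabelling.tree (hg.map (φ := Sum.elim child fun _ => .root) ?_) rfl, rfl⟩
  rintro _ ⟨_, -, rfl⟩
  exact .inl rfl

theorem IsRigid.apply_root {f : Vertex (tree c) → Vertex (tree d)} (hf : IsRigid f) :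
    f .root = .root := by
  obtain ⟨e, he, hroot⟩ := hf
  exact hroot ▸ he.apply_section .root

theorem IsRigid.comp_child_mem {f : Vertex (tree c) → Vertex (tree d)} (hf : IsRigid f) :
    f ∘ child ∈ rigidLabellings {Vertex.root} child c := by
  obtain ⟨e, he, hroot⟩ := hf
  obtain ⟨e', he'⟩ := he.below_root hroot
  exact ⟨e', he'.mono (by simp)⟩

theorem IsRigid.comp_rootedWord {f : Vertex (tree d) → Vertex (tree S)} (hf : IsRigid f)
    {g : Vertex c → Vertex d ⊕ Vertex (tree S)} {e : Vertex d → Vertex c}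
    (hg : IsParamWord {Vertex.root} g e) :
    f ∘ rootedWord g = treeElim .root (subst (f ∘ child) g) := by
  funext w
  rcases w with _ | w
  · exact hf.apply_root
  · obtain ⟨_, rfl, hw⟩ | ⟨v, hv, -⟩ := hg.mem_or_exists w
    · simp [rootedWord, subst, ← hw, hf.apply_root]
    · simp [rootedWord, subst, hv]

theorem exists_constant_color_isRigid (s t : Forest) (K : Type) [Finite K] :
    ∃ u, ∀ χ : (Vertex (tree u) → Vertex (tree s)) → K,
      ∃ g : Vertex (tree u) → Vertex (tree t), IsRigid g ∧
        ∃ κ, ∀ f : Vertex (tree t) → Vertex (tree s), IsRigid f → χ (f ∘ g) = κ := by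
  have : Nonempty (Vertex (tree s)) := ⟨.root⟩
  obtain ⟨u, hu⟩ := (dualRamsey s _ {Vertex.root} ⟨_, rfl⟩ child t).exists_color K
  refine ⟨u, fun χ => ?_⟩
  obtain ⟨g, e, ρ, hg, hρ⟩ := hu fun h => χ (treeElim .root h)
  refine ⟨rootedWord g, hg.isRigid_rootedWord, ρ (rigidLabellings {Vertex.root} child t),
    fun f hf => ?_⟩
  rw [hf.comp_rootedWord hg]
  exact hρ _ rfl _ hf.comp_child_mem

end Forest

/-! ### Ordered trees and forests -/

theorem treeImmSucc_iff_covBy {α : Type} [PartialOrder α] {v w : α} :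
    TreeImmSucc (· ≤ ·) v w ↔ v ⋖ w := by
  refine ⟨fun ⟨hle, hne, h⟩ => ⟨lt_of_le_of_ne hle hne, fun u hvu huw => ?_⟩,
    fun h => ⟨h.le, h.ne, fun u => h.eq_or_eq⟩⟩
  exact (h u hvu.le huw.le).elim hvu.ne' huw.ne

namespace OTree

open Forest Vertex

variable {S T : OTree} {m v w : T.α} {c d X Y : Forest}

instance : Finite T.α := T.fin

instance : PartialOrder T.α where
  le := T.le
  le_refl := T.le_refl
  le_trans := T.le_trans
  le_antisymm := T.le_antisymm

theorem IsMeet.unique {m' : T.α} (h : T.IsMeet v w m) (h' : T.IsMeet v w m') : m = m' :=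
  T.le_antisymm m m' (h'.2.2 m h.1 h.2.1) (h.2.2 m' h'.1 h'.2.1)

theorem isMeet_left_iff : T.IsMeet v w v ↔ v ≤ w :=
  ⟨fun h => h.2.1, fun h => ⟨T.le_refl v, h, fun _ hv _ => hv⟩⟩

theorem exists_isMeet (v w : T.α) : ∃ m, T.IsMeet v w m := by
  obtain ⟨m, hm⟩ := (Set.toFinite {u : T.α | u ≤ v ∧ u ≤ w}).exists_maximal
    ⟨T.root, T.root_le v, T.root_le w⟩
  refine ⟨m, hm.prop.1, hm.prop.2, fun u hv hw => ?_⟩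
  exact (T.pred_linear v u m hv hm.prop.1).elim id (hm.le_of_ge ⟨hv, hw⟩)

theorem eq_of_covBy {a b : T.α} (ha : m ⋖ a) (hb : m ⋖ b) (hav : a ≤ v) (hbv : b ≤ v) : a = b := by
  rcases T.pred_linear v a b hav hbv with hab | hba
  · exact (hb.eq_or_eq ha.le hab).resolve_left ha.ne'
  · exact ((ha.eq_or_eq hb.le hba).resolve_left hb.ne').symm

/-- The set of immediate successors of a vertex, with the linear order given by `OTree.sOrd`. -/
def Successor (v : T.α) : Type := {a : T.α // v ⋖ a}

open Classical in
noncomputable instance (v : T.α) : LinearOrder (Successor v) where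
  le a b := T.sOrd v a.1 b.1
  le_refl a := T.sOrd_refl v a.1 (treeImmSucc_iff_covBy.2 a.2)
  le_trans a b c := T.sOrd_trans v a.1 b.1 c.1
  le_antisymm a b hab hba := Subtype.ext (T.sOrd_antisymm v a.1 b.1 hab hba)
  le_total a b := T.sOrd_total v a.1 b.1 (treeImmSucc_iff_covBy.2 a.2) (treeImmSucc_iff_covBy.2 b.2)
  toDecidableLE := inferInstance

/-- The vertices `v` and `w` are incomparable and `v` comes first in the lexicographic order. -/
def LeftOf (v w : T.α) : Prop :=
  ∃ (m : T.α) (a b : Successor m), a < b ∧ a.1 ≤ v ∧ b.1 ≤ w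

namespace LeftOf

theorem not_le (h : LeftOf v w) : ¬ v ≤ w := by
  obtain ⟨m, a, b, hab, hav, hbw⟩ := h
  exact fun hvw => hab.ne (Subtype.ext (eq_of_covBy a.2 b.2 (hav.trans hvw) hbw))

theorem not_ge (h : LeftOf v w) : ¬ w ≤ v := by
  obtain ⟨m, a, b, hab, hav, hbw⟩ := h
  exact fun hwv => hab.ne (Subtype.ext (eq_of_covBy a.2 b.2 hav (hbw.trans hwv)))

end LeftOf

theorem isMeet_of_successor_ne {a b : Successor m} (hab : a ≠ b) (hav : a.1 ≤ v) (hbw : b.1 ≤ w) :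
    T.IsMeet v w m := by
  refine ⟨a.2.le.trans hav, b.2.le.trans hbw, fun u huv huw => ?_⟩
  have hau : ¬ a.1 ≤ u := fun hau => hab (Subtype.ext (eq_of_covBy a.2 b.2 (hau.trans huw) hbw))
  have hua : u ≤ a.1 := (T.pred_linear v u a.1 huv hav).resolve_right hau
  rcases T.pred_linear a.1 u m hua a.2.le with hum | hmu
  · exact hum
  · exact ((a.2.eq_or_eq hmu hua).resolve_right fun h => hau h.ge).le

theorem LeftOf.asymm (h : LeftOf v w) : ¬ LeftOf w v := by
  obtain ⟨m, a, b, hab, hav, hbw⟩ := h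
  rintro ⟨m', b', a', hba, hbw', hav'⟩
  obtain rfl : m = m' := (isMeet_of_successor_ne hab.ne hav hbw).unique
    (isMeet_of_successor_ne hba.ne' hav' hbw')
  obtain rfl : a = a' := Subtype.ext (eq_of_covBy a.2 a'.2 hav hav')
  obtain rfl : b = b' := Subtype.ext (eq_of_covBy b.2 b'.2 hbw hbw')
  exact hab.not_gt hba

theorem exists_successor_ne (hvw : ¬ v ≤ w) (hwv : ¬ w ≤ v) :
    ∃ (m : T.α) (a b : Successor m), a ≠ b ∧ a.1 ≤ v ∧ b.1 ≤ w := by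
  obtain ⟨m, hmv, hmw, hm⟩ := exists_isMeet v w
  obtain ⟨a, ha, hav⟩ := exists_covBy_le_of_lt
    (show m < v from lt_of_le_of_ne hmv fun h => hvw (h ▸ hmw))
  obtain ⟨b, hb, hbw⟩ := exists_covBy_le_of_lt
    (show m < w from lt_of_le_of_ne hmw fun h => hwv (h ▸ hmv))
  refine ⟨m, ⟨a, ha⟩, ⟨b, hb⟩, fun hab => ha.lt.not_ge (hm a hav ?_), hav, hbw⟩
  obtain rfl : a = b := congrArg Subtype.val hab
  exact hbw

theorem leftOf_or_leftOf (hvw : ¬ v ≤ w) (hwv : ¬ w ≤ v) : LeftOf v w ∨ LeftOf w v := by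
  obtain ⟨m, a, b, hab, hav, hbw⟩ := exists_successor_ne hvw hwv
  exact hab.lt_or_gt.imp (fun h => ⟨m, a, b, h, hav, hbw⟩) fun h => ⟨m, b, a, h, hbw, hav⟩

theorem lexLE_iff : T.lexLE v w ↔ v ≤ w ∨ LeftOf v w := by
  refine or_congr_right ⟨?_, fun h => ⟨h.not_le, h.not_ge, ?_⟩⟩
  · rintro ⟨-, -, m, a, b, hm, ha, hav, hb, hbw, hab⟩
    replace ha : m ⋖ a := treeImmSucc_iff_covBy.1 ha
    replace hb : m ⋖ b := treeImmSucc_iff_covBy.1 hb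
    refine ⟨m, ⟨a, ha⟩, ⟨b, hb⟩, lt_of_le_of_ne hab fun h => ha.lt.not_ge ?_, hav, hbw⟩
    obtain rfl : a = b := congrArg Subtype.val h
    exact hm.2.2 a hav hbw
  · obtain ⟨m, a, b, hab, hav, hbw⟩ := h
    exact ⟨m, a.1, b.1, isMeet_of_successor_ne hab.ne hav hbw, treeImmSucc_iff_covBy.2 a.2, hav,
      treeImmSucc_iff_covBy.2 b.2, hbw, hab.le⟩

end OTree

namespace Forest

open Vertex

variable {c d X Y : Forest}

/-- The ordered tree with vertices `Vertex (tree c)`. -/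
def toOTree (c : Forest) : OTree where
  α := Vertex (tree c)
  fin := inferInstance
  le := (· ≤ ·)
  le_refl := _root_.le_refl
  le_antisymm _ _ := _root_.le_antisymm
  le_trans _ _ _ := _root_.le_trans
  root := .root
  root_le := Vertex.root_le
  pred_linear _ _ _ := le_total_of_le
  sOrd v a b := v ⋖ a ∧ v ⋖ b ∧ (a = b ∨ a.LeftOf b)
  sOrd_dom _ _ _ h := ⟨treeImmSucc_iff_covBy.2 h.1, treeImmSucc_iff_covBy.2 h.2.1⟩
  sOrd_refl v a h := ⟨treeImmSucc_iff_covBy.1 h, treeImmSucc_iff_covBy.1 h, .inl rfl⟩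
  sOrd_antisymm := by
    rintro v a b ⟨-, -, hab | hab⟩ ⟨-, -, hba | hba⟩
    exacts [hab, hab, hba.symm, absurd hba hab.asymm]
  sOrd_trans := by
    rintro v a b w ⟨ha, -, rfl | hab⟩ ⟨-, hw, rfl | hbw⟩
    exacts [⟨ha, hw, .inl rfl⟩, ⟨ha, hw, .inr hbw⟩, ⟨ha, hw, .inr hab⟩,
      ⟨ha, hw, .inr (hab.trans hbw)⟩]
  sOrd_total v a b ha hb := by
    replace ha : v ⋖ a := treeImmSucc_iff_covBy.1 ha
    replace hb : v ⋖ b := treeImmSucc_iff_covBy.1 hb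
    rcases le_or_ge_or_leftOf a b with hab | hba | hab | hba
    · exact .inl ⟨ha, hb, .inl ((hb.eq_or_eq ha.le hab).resolve_left ha.ne')⟩
    · exact .inr ⟨hb, ha, .inl ((ha.eq_or_eq hb.le hba).resolve_left hb.ne')⟩
    · exact .inl ⟨ha, hb, .inr hab⟩
    · exact .inr ⟨hb, ha, .inr hba⟩

end Forest

namespace OTree

open Forest Vertex

variable {S T : OTree} {v w : T.α} {c d X Y : Forest}

/-- Embeddings of a forest into an ordered tree, for the ancestor relation and the left-right
order. -/
structure IsForestEmb (φ : Vertex X → T.α) : Prop where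
  le_iff : ∀ v w, φ v ≤ φ w ↔ v ≤ w
  leftOf : ∀ v w, v.LeftOf w → LeftOf (φ v) (φ w)

namespace IsForestEmb

variable {φ : Vertex X → T.α} {ψ : Vertex Y → T.α}

theorem injective (hφ : IsForestEmb φ) : Function.Injective φ := fun v w hvw =>
  _root_.le_antisymm ((hφ.le_iff v w).1 hvw.le) ((hφ.le_iff w v).1 hvw.ge)

theorem leftOf_iff (hφ : IsForestEmb φ) (v w : Vertex X) : LeftOf (φ v) (φ w) ↔ v.LeftOf w := by
  refine ⟨fun h => ?_, hφ.leftOf v w⟩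
  rcases le_or_ge_or_leftOf v w with hvw | hvw | hvw | hvw
  · exact absurd ((hφ.le_iff v w).2 hvw) h.not_le
  · exact absurd ((hφ.le_iff w v).2 hvw) h.not_ge
  · exact hvw
  · exact absurd (hφ.leftOf w v hvw) h.asymm

theorem append (hφ : IsForestEmb φ) (hψ : IsForestEmb ψ) (h : ∀ x y, LeftOf (φ x) (ψ y)) :
    IsForestEmb (appendElim φ ψ) := by
  constructor
  · rintro (_ | _ | v | v) (_ | _ | w | w)
    exacts [hφ.le_iff v w, iff_of_false (h v w).not_le id, iff_of_false (h w v).not_ge id,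
      hψ.le_iff v w]
  · rintro (_ | _ | v | v) (_ | _ | w | w) hvw
    exacts [hφ.leftOf v w hvw, h v w, hvw.elim, hψ.leftOf v w hvw]

theorem tree (hφ : IsForestEmb φ) (hv : ∀ x, v < φ x) : IsForestEmb (treeElim v φ) := by
  constructor
  · rintro (_ | x) (_ | y)
    exacts [iff_of_true le_rfl le_rfl, iff_of_true (hv y).le (Vertex.root_le _),
      iff_of_false (hv x).not_ge id, hφ.le_iff x y]
  · rintro (_ | x) (_ | y) hxy
    exacts [hxy.elim, hxy.elim, hxy.elim, hφ.leftOf x y hxy]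

theorem map_root {φ : Vertex (Forest.tree c) ≃ T.α} (hφ : IsForestEmb φ) : φ .root = T.root := by
  refine _root_.le_antisymm ?_ (T.root_le _)
  rw [← φ.apply_symm_apply T.root, hφ.le_iff]
  exact Vertex.root_le _

end IsForestEmb

theorem isForestEmb_toOTree (c : Forest) :
    IsForestEmb (T := c.toOTree) (Equiv.refl (Vertex (tree c))) := by
  refine ⟨fun v w => Iff.rfl, fun v w hvw => ?_⟩
  refine (leftOf_or_leftOf (T := c.toOTree) hvw.not_le hvw.not_ge).resolve_right ?_
  rintro ⟨m, a, b, hab, haw, hbv⟩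
  rcases hab.le with ⟨-, -, h | h⟩
  · exact hab.ne (Subtype.ext h)
  · exact hvw.asymm (h.mono haw hbv)

theorem exists_isForestEmb_range_eq_biUnion_Ici
    (h : ∀ a : Successor v, ∃ c, ∃ φ : Vertex (tree c) → T.α,
      IsForestEmb φ ∧ Set.range φ = Set.Ici a.1) (s : Finset (Successor v)) :
    ∃ X, ∃ φ : Vertex X → T.α, IsForestEmb φ ∧ Set.range φ = ⋃ a ∈ s, Set.Ici a.1 := by
  induction s using Finset.induction_on_min with
  | empty => exact ⟨nil, isEmptyElim, ⟨isEmptyElim, isEmptyElim⟩, by simp [Set.range_eq_empty]⟩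
  | insert a s ha ih =>
    obtain ⟨X, ψ, hψ, hrange⟩ := ih
    obtain ⟨c, φ, hφ, hrange'⟩ := h a
    refine ⟨(tree c).append X, appendElim φ ψ, hφ.append hψ fun x y => ?_, ?_⟩
    · have hy : ψ y ∈ ⋃ b ∈ s, Set.Ici b.1 := hrange ▸ Set.mem_range_self y
      obtain ⟨b, hb, hby⟩ := Set.mem_iUnion₂.1 hy
      exact ⟨v, a, b, ha b hb, hrange'.le (Set.mem_range_self x), hby⟩
    · rw [Finset.set_biUnion_insert, ← hrange, ← hrange']
      exact range_appendElim φ ψ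

theorem exists_isForestEmb_range_eq_Ici (v : T.α) :
    ∃ c, ∃ φ : Vertex (tree c) → T.α, IsForestEmb φ ∧ Set.range φ = Set.Ici v := by
  induction v using WellFoundedGT.induction with
  | _ v ih =>
    have : Finite (Successor v) := inferInstanceAs (Finite {a // v ⋖ a})
    have := Fintype.ofFinite (Successor v)
    obtain ⟨X, φ, hφ, hrange⟩ :=
      exists_isForestEmb_range_eq_biUnion_Ici (fun a => ih a.1 a.2.lt) Finset.univ
    have hmem (w : T.α) : w ∈ Set.range φ ↔ v < w := by
      simp only [hrange, Finset.mem_univ, Set.iUnion_true, Set.mem_iUnion, Set.mem_Ici]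
      refine ⟨fun ⟨a, haw⟩ => a.2.lt.trans_le haw, fun hvw => ?_⟩
      obtain ⟨a, ha, haw⟩ := exists_covBy_le_of_lt hvw
      exact ⟨⟨a, ha⟩, haw⟩
    refine ⟨X, treeElim v φ, hφ.tree fun x => (hmem _).1 ⟨x, rfl⟩, ?_⟩
    rw [range_treeElim, Set.ext hmem]
    exact Set.Ioi_insert

theorem exists_equiv_isForestEmb (T : OTree) :
    ∃ c, ∃ φ : Vertex (tree c) ≃ T.α, IsForestEmb φ := by
  obtain ⟨c, φ, hφ, hrange⟩ := exists_isForestEmb_range_eq_Ici T.root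
  refine ⟨c, .ofBijective φ ⟨hφ.injective, Set.range_eq_univ.1 ?_⟩, hφ⟩
  exact hrange.trans (Set.eq_univ_of_forall T.root_le)

theorem IsMorphism.le_iff {e : S.α → T.α} (he : IsMorphism S T e) (hinj : Function.Injective e)
    {v w : S.α} : e v ≤ e w ↔ v ≤ w := by
  refine ⟨fun h => ?_, fun h => isMeet_left_iff.1 (he.1 v w v (isMeet_left_iff.2 h))⟩
  obtain ⟨m, hm⟩ := exists_isMeet v w
  obtain rfl : v = m := hinj ((isMeet_left_iff.2 h).unique (he.1 v w m hm))
  exact hm.2.1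

section Transfer

variable {φ : Vertex (tree c) ≃ T.α} {ψ : Vertex (tree d) ≃ S.α}

theorem IsMorphism.isMor (hφ : IsForestEmb φ) (hψ : IsForestEmb ψ) {e : S.α → T.α}
    (he : IsMorphism S T e) (hinj : Function.Injective e) : IsMor (φ.symm ∘ e ∘ ψ) := by
  have hφe (v : Vertex (tree d)) : φ ((φ.symm ∘ e ∘ ψ) v) = e (ψ v) := φ.apply_symm_apply _
  refine ⟨⟨fun v w => ?_, fun v w hvw => ?_⟩, fun v w u hv hw => ?_⟩
  · rw [← hφ.le_iff, hφe, hφe, he.le_iff hinj, hψ.le_iff]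
  · rw [← hφ.leftOf_iff, hφe, hφe]
    refine (lexLE_iff.1 (he.2.1 _ _ (lexLE_iff.2 (.inr (hψ.leftOf v w hvw))))).resolve_left ?_
    rw [he.le_iff hinj, hψ.le_iff]
    exact hvw.not_le
  · obtain ⟨m, hm⟩ := exists_isMeet (ψ v) (ψ w)
    obtain ⟨m, rfl⟩ := ψ.surjective m
    rw [← hφ.le_iff, hφe] at hv hw
    refine ⟨m, (hψ.le_iff _ _).1 hm.1, (hψ.le_iff _ _).1 hm.2.1, ?_⟩
    rw [← hφ.le_iff, hφe]
    exact (he.1 _ _ _ hm).2.2 _ hv hw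

theorem isMorphism_of_isMor (hφ : IsForestEmb φ) (hψ : IsForestEmb ψ)
    {e : Vertex (tree d) → Vertex (tree c)} (he : IsMor e) (hroot : e .root = .root) :
    IsMorphism S T (φ ∘ e ∘ ψ.symm) := by
  have hle (v w : Vertex (tree d)) : φ (e v) ≤ φ (e w) ↔ ψ v ≤ ψ w := by
    rw [hφ.le_iff, he.le_iff, hψ.le_iff]
  refine ⟨?_, ?_, ?_⟩
  · refine ψ.forall_congr_right.1 fun v => ψ.forall_congr_right.1 fun w =>
      ψ.forall_congr_right.1 fun m hm => ?_
    simp only [Function.comp_apply, Equiv.symm_apply_apply]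
    refine ⟨(hle _ _).2 hm.1, (hle _ _).2 hm.2.1, φ.forall_congr_right.1 fun u huv huw => ?_⟩
    obtain ⟨n, hnv, hnw, hun⟩ :=
      he.exists_meet v w u ((hφ.le_iff _ _).1 huv) ((hφ.le_iff _ _).1 huw)
    refine ((hφ.le_iff _ _).2 hun).trans ((hle _ _).2 ?_)
    exact hm.2.2 _ ((hψ.le_iff _ _).2 hnv) ((hψ.le_iff _ _).2 hnw)
  · refine ψ.forall_congr_right.1 fun v => ψ.forall_congr_right.1 fun w => ?_
    simp only [lexLE_iff, Function.comp_apply, Equiv.symm_apply_apply]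
    rw [hle, hψ.leftOf_iff, hφ.leftOf_iff, he.leftOf_iff]
    exact id
  · simp [← hψ.map_root, hroot, hφ.map_root]

theorem IsRigidSurjection.isRigid (hφ : IsForestEmb φ) (hψ : IsForestEmb ψ) {f : T.α → S.α}
    (hf : IsRigidSurjection T S f) : IsRigid (ψ.symm ∘ f ∘ φ) := by
  obtain ⟨e, he, hle, hsec⟩ := hf
  refine ⟨φ.symm ∘ e ∘ ψ, ⟨he.isMor hφ hψ (Function.LeftInverse.injective hsec), fun v => ?_,
    fun w => .inr ⟨_, rfl, ?_⟩⟩, ?_⟩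
  · simp [hsec]
  · rw [← hφ.le_iff]
    have h : e (f (φ w)) ≤ φ w := hle (φ w)
    simpa only [Function.comp_apply, Equiv.apply_symm_apply] using h
  · simp [hψ.map_root, he.2.2, ← hφ.map_root]

theorem isRigidSurjection_of_isRigid (hφ : IsForestEmb φ) (hψ : IsForestEmb ψ)
    {f : Vertex (tree c) → Vertex (tree d)} (hf : IsRigid f) :
    IsRigidSurjection T S (ψ ∘ f ∘ φ.symm) := by
  obtain ⟨e, he, hroot⟩ := hf
  refine ⟨φ ∘ e ∘ ψ.symm, isMorphism_of_isMor hφ hψ he.isMor hroot, ?_, ?_⟩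
  · refine φ.forall_congr_right.1 fun w => ?_
    obtain ⟨_, ⟨⟩, -⟩ | ⟨v, hv, hvw⟩ := he.mem_or_exists w
    simp only [Function.comp_apply, Equiv.symm_apply_apply, hv]
    exact (hφ.le_iff _ _).2 hvw
  · simp [he.apply_section]

end Transfer

end OTree

/-- **Solecki's dual Ramsey theorem for trees.** For every number of colors `c ≥ 1` and all
ordered trees `S, T` there is an ordered tree `U` such that for every coloring with `c` colors
of the rigid surjections from `U` to `S` there is a rigid surjection `g₀ : U → T` such that
`{f ∘ g₀ : f a rigid surjection from T to S}` is monochromatic. -/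
theorem dual_ramsey_for_trees (c : ℕ) (hc : 0 < c) (S T : OTree) :
    ∃ U : OTree, ∀ χ : (U.α → S.α) → Fin c,
      ∃ g₀ : U.α → T.α, IsRigidSurjection U T g₀ ∧
        ∃ color : Fin c, ∀ f : T.α → S.α, IsRigidSurjection T S f → χ (f ∘ g₀) = color := by
  obtain ⟨s, ψ, hψ⟩ := S.exists_equiv_isForestEmb
  obtain ⟨t, φ, hφ⟩ := T.exists_equiv_isForestEmb
  obtain ⟨u, hu⟩ := Forest.exists_constant_color_isRigid s t (Fin c)
  refine ⟨u.toOTree, fun χ => ?_⟩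
  obtain ⟨g, hg, κ, hκ⟩ := hu fun h => χ (ψ ∘ h)
  have hg₀ : IsRigidSurjection u.toOTree T (φ ∘ g) :=
    isRigidSurjection_of_isRigid (isForestEmb_toOTree u) hφ hg
  refine ⟨φ ∘ g, hg₀, κ, fun f hf => ?_⟩
  have hfg : f ∘ φ ∘ g = ψ ∘ (ψ.symm ∘ f ∘ φ) ∘ g := by ext w; simp
  exact hfg ▸ hκ _ (hf.isRigid hφ hψ)
end

section
/- Let c be a positive integer. For all positive integers k and l there exists a positive integer m such that for every coloring with c colors of the set of all k-partitions of [m] there exists an l-partition 𝒬 of [m] such that all k-subpartitions of 𝒬 get the same color. -/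
open Finset

/-- A partition `P` is a *subpartition* of a partition `Q` if each part of `P` is the union
of some parts of `Q`. -/
def Finpartition.IsSubpartitionOf {m : ℕ}
    (P Q : Finpartition (Finset.univ : Finset (Fin m))) : Prop :=
  ∀ p ∈ P.parts, ∃ S : Finset (Finset (Fin m)), S ⊆ Q.parts ∧ p = S.sup id

/-!
A parameter word over `A` is a word in letters of `A` and parameters numbered in the order of their
first occurrences; over the empty alphabet, a word of length `n` with `k` parameters is the same as
a `k`-partition of `[n]`, and substituting words for the parameters amounts to passing to
subpartitions. The theorem is therefore the case of an empty alphabet of the Graham–Rothschild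
theorem for parameter words, which is proved by induction on the number `k` of parameters of the
words being colored, simultaneously for all finite alphabets. The case `k = 0` is the Hales–Jewett
theorem. For `k + 1`, treating the first parameter as an additional letter and using the case `k`
makes the color depend only on the letters before the first parameter; applying Hales–Jewett to
each number of such letters makes it depend only on their number; a pigeonhole argument then
removes this dependence too.
-/

universe u

/-- Parameter words of length `n` over the alphabet `A` in which exactly `k` parameters occur. The
parameters are numbered by first occurrence, so `new` introduces the first one without naming it;
the rest of the word sees it as the additional letter `none`. -/
inductive ParameterWord : Type u → ℕ → ℕ → Type (u + 1)
  | nil {A : Type u} : ParameterWord A 0 0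
  | letter {A : Type u} {n k : ℕ} (a : A) (w : ParameterWord A n k) : ParameterWord A (n + 1) k
  | new {A : Type u} {n k : ℕ} (w : ParameterWord (Option A) n k) :
    ParameterWord A (n + 1) (k + 1)

namespace ParameterWord

variable {A B C : Type u} {X Y : Type*} {n l m k : ℕ}

theorem comp_optionElim' (p : X → Y) (f : A → X) (b : X) :
    p ∘ Option.elim' b f = Option.elim' (p b) (p ∘ f) := by
  funext o; cases o <;> rfl

theorem optionElim'_comp_map (f : A → B) (h : B → X) (b : X) :
    Option.elim' b h ∘ Option.map f = Option.elim' b (h ∘ f) := by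
  funext o; cases o <;> rfl

/-! ### Substitution -/

/-- The word obtained from `w` by replacing its letters along `f` and its parameters by the
successive entries of `u`. It composes parameter words; the change of alphabet is what makes the
recursion go through. -/
def subst {A B : Type u} {n l k : ℕ} :
    ParameterWord A n l → (A → B) → ParameterWord B l k → ParameterWord B n k
  | nil, _, nil => nil
  | letter a w, f, u => letter (f a) (subst w f u)
  | new w, f, letter b u => letter b (subst w (Option.elim' b f) u)
  | new w, f, new u => new (subst w (Option.map f) u)

/-- The word consisting of `l` distinct parameters, the identity for substitution. -/
def params : (A : Type u) → (l : ℕ) → ParameterWord A l l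
  | _, 0 => nil
  | A, l + 1 => new (params (Option A) l)

theorem subst_assoc (w : ParameterWord A n l) (f : A → B) (u : ParameterWord B l m) (g : B → C)
    (v : ParameterWord C m k) : (w.subst f u).subst g v = w.subst (g ∘ f) (u.subst g v) := by
  induction w generalizing B C m k with
  | nil => cases u; cases v; rfl
  | letter a w ih => simp [subst, ih]
  | new w ih =>
    cases u with
    | letter b u => simp [subst, ih, comp_optionElim']
    | new u => cases v <;> simp [subst, ih, optionElim'_comp_map]

theorem params_subst (f : A → B) (v : ParameterWord B l k) : (params A l).subst f v = v := by
  induction v generalizing A with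
  | nil => rfl
  | letter b v ih => simp [params, subst, ih]
  | new v ih => simp [params, subst, ih]

/-! ### Letters before the first parameter -/

/-- The letters of a parameter word before its first parameter. -/
def leadingLetters {A : Type u} {n k : ℕ} : ParameterWord A n k → List A
  | nil => []
  | letter a w => a :: leadingLetters w
  | new _ => []

/-- Replaces the parameters of a word by the successive entries of a list, and cuts the word off at
the first parameter for which the list has no entry left. -/
def substList {A B : Type u} {n l : ℕ} : ParameterWord A n l → (A → B) → List B → List B
  | nil, _, _ => []
  | letter a w, f, t => f a :: substList w f t
  | new _, _, [] => []
  | new w, f, b :: t => b :: substList w (Option.elim' b f) t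

/-- Appends an additional parameter to a word. -/
def snoc {A : Type u} {n l : ℕ} : ParameterWord A n l → ParameterWord A (n + 1) (l + 1)
  | nil => new nil
  | letter a w => letter a (snoc w)
  | new w => new (snoc w)

theorem length_leadingLetters_lt :
    ∀ {A : Type u} {n k : ℕ} (w : ParameterWord A n (k + 1)), w.leadingLetters.length < n
  | _, _, _, letter _ w => Nat.succ_lt_succ (length_leadingLetters_lt w)
  | _, _, _, new _ => Nat.succ_pos _

theorem leadingLetters_subst (w : ParameterWord A n l) (f : A → B) (u : ParameterWord B l k) :
    (w.subst f u).leadingLetters = w.substList f u.leadingLetters := by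
  induction w generalizing B k with
  | nil => cases u; rfl
  | letter a w ih => simp [subst, leadingLetters, substList, ih]
  | new w ih => cases u <;> simp [subst, leadingLetters, substList, ih]

theorem substList_subst (w : ParameterWord A n l) (f : A → B) (u : ParameterWord B l k)
    (g : B → C) (t : List C) :
    (w.subst f u).substList g t = w.substList (g ∘ f) (u.substList g t) := by
  induction w generalizing B C k t with
  | nil => cases u; rfl
  | letter a w ih => simp [subst, substList, ih]
  | new w ih =>
    cases u with
    | letter b u => simp [subst, substList, ih, comp_optionElim']
    | new u => cases t <;> simp [subst, substList, ih, optionElim'_comp_map]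

theorem substList_snoc (w : ParameterWord A n l) (f : A → B) (t : List B) (ht : t.length ≤ l) :
    w.snoc.substList f t = w.substList f t := by
  induction w generalizing B t with
  | nil => cases List.length_eq_zero_iff.1 (Nat.le_zero.1 ht); rfl
  | letter a w ih => simp [snoc, substList, ih f t ht]
  | new w ih =>
    cases t with
    | nil => rfl
    | cons b t => simp [snoc, substList, ih _ t (Nat.le_of_succ_le_succ ht)]

/-! ### Evaluation -/

/-- The sequence of values of the entries of a word when its letters take values by `h` and its
parameters by `g`. -/
def eval {X : Type*} {A : Type u} {n k : ℕ} :
    ParameterWord A n k → (A → X) → (Fin k → X) → Fin n → X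
  | nil, _, _ => Fin.elim0
  | letter a w, h, g => Fin.cons (h a) (eval w h g)
  | new w, h, g => Fin.cons (g 0) (eval w (Option.elim' (g 0) h) (Fin.tail g))

/-- The word without parameters that spells a given sequence of letters. -/
def ofFn {A : Type u} : {n : ℕ} → (Fin n → A) → ParameterWord A n 0
  | 0, _ => nil
  | _ + 1, x => letter (x 0) (ofFn (Fin.tail x))

theorem ofFn_eval {A : Type u} (g : Fin 0 → A) :
    ∀ {n : ℕ} (w : ParameterWord A n 0), ofFn (w.eval id g) = w
  | _, nil => rfl
  | _, letter a w => by simp [eval, ofFn, ofFn_eval g w]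

theorem leadingLetters_ofFn (x : Fin n → A) : (ofFn x).leadingLetters = List.ofFn x := by
  induction n with
  | zero => simp [ofFn, leadingLetters]
  | succ n ih => rw [ofFn, leadingLetters, ih, List.ofFn_succ]; rfl

theorem eval_subst (w : ParameterWord A n l) (f : A → B) (u : ParameterWord B l k) (h : B → X)
    (g : Fin k → X) : (w.subst f u).eval h g = w.eval (h ∘ f) (u.eval h g) := by
  induction w generalizing B k with
  | nil => cases u; rfl
  | letter a w ih => simp [subst, eval, ih]
  | new w ih => cases u <;> simp [subst, eval, ih, comp_optionElim', optionElim'_comp_map]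

theorem comp_eval (p : X → Y) (w : ParameterWord A n k) (h : A → X) (g : Fin k → X) :
    p ∘ w.eval h g = w.eval (p ∘ h) (p ∘ g) := by
  induction w with
  | nil => exact Subsingleton.elim _ _
  | letter a w ih => simp [eval, Fin.comp_cons, ih]
  | new w ih => simp [eval, Fin.comp_cons, ih, comp_optionElim', Fin.comp_tail]

theorem range_optionElim' (b : X) (h : A → X) :
    Set.range (Option.elim' b h) = insert b (Set.range h) := by
  ext x; simp [Option.exists, eq_comm]

theorem range_union_range_eval (w : ParameterWord A n k) (h : A → X) (g : Fin k → X) :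
    Set.range h ∪ Set.range (w.eval h g) = Set.range h ∪ Set.range g := by
  induction w with
  | nil => simp
  | letter a w ih => simp [eval, Fin.range_cons, ih, Set.union_insert]
  | new w ih =>
    have hg : Set.range g = insert (g 0) (Set.range (Fin.tail g)) := by
      rw [← Fin.range_cons, Fin.cons_self_tail]
    have := ih (Option.elim' (g 0) h) (Fin.tail g)
    rw [range_optionElim', Set.insert_union, Set.insert_union] at this
    rw [eval, Fin.range_cons, Set.union_insert, this, hg, Set.union_insert]

theorem exists_eval_eq (h : A → X) (f : Fin n → X) :
    ∃ (k : ℕ) (w : ParameterWord A n k) (g : Fin k → X),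
      Function.Injective g ∧ Disjoint (Set.range h) (Set.range g) ∧ w.eval h g = f := by
  induction n generalizing A with
  | zero =>
    exact ⟨0, nil, Fin.elim0, Function.injective_of_subsingleton _, by simp, Subsingleton.elim _ _⟩
  | succ n ih =>
    by_cases hf : f 0 ∈ Set.range h
    · obtain ⟨a, ha⟩ := hf
      obtain ⟨k, w, g, hg, hd, hw⟩ := ih h (Fin.tail f)
      exact ⟨k, letter a w, g, hg, hd, by simp [eval, hw, ha]⟩
    · obtain ⟨k, w, g, hg, hd, hw⟩ := ih (Option.elim' (f 0) h) (Fin.tail f)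
      rw [range_optionElim', Set.disjoint_insert_left] at hd
      refine ⟨k + 1, new w, Fin.cons (f 0) g, Fin.cons_injective_iff.2 ⟨hd.1, hg⟩, ?_, ?_⟩
      · rw [Fin.range_cons, Set.disjoint_insert_right]
        exact ⟨hf, hd.2⟩
      · simp [eval, hw]

/-- The permutation is needed because the parameters of a word are numbered by first occurrence. -/
theorem exists_eval_comp_perm_eq {h : A → X} {g : Fin k → X} (hg : Function.Injective g)
    {f : Fin n → X} (hfg : Set.range f \ Set.range h = Set.range g) :
    ∃ (w : ParameterWord A n k) (σ : Equiv.Perm (Fin k)), w.eval h (g ∘ σ) = f := by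
  obtain ⟨k', w, g', hg', hd, hw⟩ := exists_eval_eq h f
  have hrange : Set.range g' = Set.range g := by
    rw [← hfg, ← hw, ← Set.union_sdiff_left (t := Set.range (w.eval h g')), range_union_range_eval,
      Set.union_sdiff_cancel_left hd.inter_eq.le]
  let σ : Fin k' ≃ Fin k :=
    (Equiv.ofInjective g' hg').trans ((Equiv.setCongr hrange).trans (Equiv.ofInjective g hg).symm)
  have hσ : g ∘ σ = g' := by
    funext i
    exact Equiv.apply_ofInjective_symm hg _
  obtain rfl : k' = k := Fin.equiv_iff_eq.1 ⟨σ⟩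
  exact ⟨w, σ, hσ ▸ hw⟩

theorem exists_eval_eq_idxFun (S : Combinatorics.Subspace (Fin l) A (Fin n)) :
    ∃ (w : ParameterWord A n l) (σ : Equiv.Perm (Fin l)),
      w.eval Sum.inl (Sum.inr ∘ σ) = S.idxFun := by
  refine exists_eval_comp_perm_eq Sum.inr_injective (Set.ext fun x => ?_)
  cases x with
  | inl a => simp
  | inr i => simpa using S.proper i

theorem exists_comp_eval_eq {f : Fin n → Fin k} (hf : Function.Surjective f) :
    ∃ (w : ParameterWord Empty n k) (σ : Equiv.Perm (Fin k)), σ ∘ w.eval Empty.elim id = f := by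
  obtain ⟨w, σ, hw⟩ := exists_eval_comp_perm_eq (h := Empty.elim) (g := id)
    Function.injective_id (f := f) (by simp [Set.range_eq_empty, hf.range_eq])
  refine ⟨w, σ, ?_⟩
  rw [comp_eval, ← hw]
  congr 1
  exact Subsingleton.elim _ _

theorem eval_surjective (w : ParameterWord Empty n k) :
    Function.Surjective (w.eval Empty.elim (id : Fin k → Fin k)) := by
  simpa [← Set.range_eq_univ, Set.range_eq_empty] using
    range_union_range_eval w Empty.elim (id : Fin k → Fin k)

/-! ### The Graham–Rothschild theorem for parameter words -/

/-- The partition relation `n ⟶ (l)^k` for colorings of parameter words over `A` by `κ`: however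
the words of length `n` with `k` parameters are colored, some word of length `n` with `l`
parameters has all its substitution instances with `k` parameters of one color. -/
def Arrows (A : Type u) (κ : Type*) (n l k : ℕ) : Prop :=
  ∀ χ : ParameterWord A n k → κ, ∃ (W : ParameterWord A n l) (c : κ),
    ∀ u : ParameterWord A l k, χ (W.subst id u) = c

theorem exists_arrows_zero (A : Type u) (κ : Type*) [Finite A] [Finite κ] (l : ℕ) :
    ∃ n, Arrows A κ n l 0 := by
  obtain ⟨n, hn⟩ := Combinatorics.Subspace.exists_mono_in_high_dimension_fin A κ (Fin l)
  refine ⟨n, fun χ => ?_⟩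
  obtain ⟨S, c, hS⟩ := hn fun x => χ (ofFn x)
  obtain ⟨W, σ, hW⟩ := exists_eval_eq_idxFun S
  refine ⟨W, c, fun u => ?_⟩
  let y : Fin l → A := u.eval id Fin.elim0
  have hy : S (y ∘ σ.symm) = (W.subst id u).eval id Fin.elim0 := calc
    S (y ∘ σ.symm) = Sum.elim id (y ∘ σ.symm) ∘ W.eval Sum.inl (Sum.inr ∘ σ) := by rw [hW]; rfl
    _ = W.eval id y := by
      rw [comp_eval, ← Function.comp_assoc, Sum.elim_comp_inl, Sum.elim_comp_inr,
        Function.comp_assoc, Equiv.symm_comp_self, Function.comp_id]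
    _ = (W.subst id u).eval id Fin.elim0 := (eval_subst W id u id Fin.elim0).symm
  rw [← hS (y ∘ σ.symm), hy]
  exact congrArg χ (ofFn_eval _ _).symm

/-- Induction on `l`. The first entry of `W` is a parameter: when it becomes a letter `b`, the
induction hypothesis applies for all `b` at once, with colors in `A → κ`; when it remains a
parameter, it acts as the letter `none` and the hypothesis on `k` applies. -/
theorem exists_color_eq_leadingLetters [Finite A]
    (hk : ∀ (κ : Type u) [Finite κ] [Nonempty κ] (l : ℕ), ∃ n, Arrows (Option A) κ n l k)
    (κ : Type u) [Finite κ] [Nonempty κ] (l : ℕ) :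
    ∃ n, ∀ χ : ParameterWord A n (k + 1) → κ, ∃ (W : ParameterWord A n l) (φ : List A → κ),
      ∀ u : ParameterWord A l (k + 1), χ (W.subst id u) = φ u.leadingLetters := by
  induction l generalizing κ with
  | zero => exact ⟨0, fun χ => ⟨nil, fun _ => Classical.arbitrary κ, nofun⟩⟩
  | succ l ih =>
    obtain ⟨n', ih⟩ := ih (A → κ)
    obtain ⟨n, hn⟩ := hk κ n'
    refine ⟨n + 1, fun χ => ?_⟩
    obtain ⟨V, c, hV⟩ := hn fun v => χ (new v)
    obtain ⟨V', φ, hV'⟩ := ih fun u b => χ (letter b (V.subst (Option.elim' b id) u))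
    refine ⟨new (V.subst id (V'.subst some (params (Option A) l))),
      fun | [] => c | b :: t => φ t b, fun u => ?_⟩
    cases u with
    | letter b u =>
      simp only [leadingLetters, subst, subst_assoc, params_subst]
      exact congrFun (hV' u) b
    | new v =>
      simp only [leadingLetters, subst, subst_assoc, params_subst, Option.map_id]
      exact hV _

theorem exists_color_eq_length (A : Type u) (κ : Type*) [Finite A] [Finite κ] (l : ℕ) :
    ∃ n, ∀ φ : List A → κ, ∃ (W : ParameterWord A n l) (ψ : ℕ → κ),
      ∀ t : List A, t.length < l → φ (W.substList id t) = ψ t.length := by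
  induction l with
  | zero => exact ⟨0, fun φ => ⟨nil, fun _ => φ [], nofun⟩⟩
  | succ l ih =>
    obtain ⟨n', ih⟩ := ih
    obtain ⟨n, hn⟩ := exists_arrows_zero A κ n'
    refine ⟨n + 1, fun φ => ?_⟩
    obtain ⟨V, c, hV⟩ := hn fun w => φ w.leadingLetters
    obtain ⟨V', ψ, hV'⟩ := ih fun t => φ (V.substList id t)
    refine ⟨(V.subst id V').snoc, Function.update ψ l c, fun t ht => ?_⟩
    rw [substList_snoc _ _ _ (Nat.le_of_lt_succ ht), substList_subst]
    obtain rfl | hlt := (Nat.le_of_lt_succ ht).eq_or_lt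
    · have := hV (V'.subst id (ofFn t.get))
      rwa [leadingLetters_subst, leadingLetters_subst, leadingLetters_ofFn, List.ofFn_get,
        ← Function.update_self t.length c ψ] at this
    · rw [Function.update_of_ne hlt.ne]
      exact hV' t hlt

/-- The word has its parameters at positions satisfying `p` and arbitrary letters elsewhere, so
that a list too short for `W` is cut off at such a position. -/
theorem exists_forall_length_substList [Nonempty A] (p : ℕ → Prop) [DecidablePred p] {n l : ℕ}
    (hl : l ≤ Nat.count p n) :
    ∃ W : ParameterWord A n l, ∀ (B : Type u) (f : A → B) (t : List B), t.length < l →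
      p (W.substList f t).length := by
  induction n generalizing A l p with
  | zero =>
    obtain rfl : l = 0 := by simpa using hl
    exact ⟨nil, nofun⟩
  | succ n ih =>
    rw [Nat.count_succ'] at hl
    cases l with
    | zero =>
      obtain ⟨W, -⟩ := ih (A := A) (fun i => p (i + 1)) (Nat.zero_le _)
      exact ⟨letter (Classical.arbitrary A) W, nofun⟩
    | succ l =>
      by_cases h0 : p 0
      · rw [if_pos h0, Nat.succ_le_succ_iff] at hl
        obtain ⟨W, hW⟩ := ih (A := Option A) (fun i => p (i + 1)) hl
        refine ⟨new W, fun B f t ht => ?_⟩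
        cases t with
        | nil => exact h0
        | cons b t => exact hW B (Option.elim' b f) t (Nat.lt_of_succ_lt_succ ht)
      · rw [if_neg h0] at hl
        obtain ⟨W, hW⟩ := ih (A := A) (fun i => p (i + 1)) hl
        exact ⟨letter (Classical.arbitrary A) W, hW⟩

theorem exists_length_color_eq (A : Type u) (κ : Type*) [Finite κ] (l : ℕ) :
    ∃ n, ∀ ψ : ℕ → κ, ∃ (W : ParameterWord A n l) (c : κ),
      ∀ t : List A, t.length < l → ψ (W.substList id t).length = c := by
  classical
  obtain hA | hA := isEmpty_or_nonempty A
  · exact ⟨l, fun ψ => ⟨params A l, _, fun t _ => by rw [Subsingleton.elim t []]⟩⟩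
  · have := Fintype.ofFinite κ
    refine ⟨Fintype.card κ * l, fun ψ => ?_⟩
    have : Nonempty κ := ⟨ψ 0⟩
    obtain ⟨c, -, hc⟩ := exists_le_card_fiber_of_mul_le_card_of_maps_to
      (s := range (Fintype.card κ * l)) (t := univ) (f := ψ) (n := l)
      (fun _ _ => mem_univ _) univ_nonempty (by simp)
    rw [← Nat.count_eq_card_filter_range] at hc
    obtain ⟨W, hW⟩ := exists_forall_length_substList (A := A) (ψ · = c) hc
    exact ⟨W, c, hW A id⟩

theorem exists_arrows (A κ : Type u) [Finite A] [Finite κ] [Nonempty κ] (l k : ℕ) :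
    ∃ n, Arrows A κ n l k := by
  induction k generalizing A κ l with
  | zero => exact exists_arrows_zero A κ l
  | succ k ih =>
    obtain ⟨n₁, h₁⟩ := exists_length_color_eq A κ l
    obtain ⟨n₂, h₂⟩ := exists_color_eq_length A κ n₁
    obtain ⟨n, h⟩ := exists_color_eq_leadingLetters (fun κ _ _ l => ih (Option A) κ l) κ n₂
    refine ⟨n, fun χ => ?_⟩
    obtain ⟨W, φ, hW⟩ := h χ
    obtain ⟨W₂, ψ, hW₂⟩ := h₂ φ
    obtain ⟨W₁, c, hW₁⟩ := h₁ ψ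
    refine ⟨W.subst id (W₂.subst id W₁), c, fun u => ?_⟩
    calc χ ((W.subst id (W₂.subst id W₁)).subst id u)
      _ = φ (W₂.substList id (W₁.subst id u).leadingLetters) := by
        rw [subst_assoc, subst_assoc, Function.comp_id, hW, leadingLetters_subst]
      _ = ψ (W₁.substList id u.leadingLetters).length := by
        rw [hW₂ _ (length_leadingLetters_lt _), leadingLetters_subst]
      _ = c := hW₁ _ (length_leadingLetters_lt u)

end ParameterWord

/-! ### Partitions into fibers -/

section FiberPartition

variable {α β γ : Type*} [Fintype α] [DecidableEq α] [DecidableEq β] [DecidableEq γ]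

instance decidableRelKer (f : α → β) : DecidableRel (Setoid.ker f) :=
  fun x y => decEq (f x) (f y)

/-- The partition of a finite type into the nonempty fibers of a function. -/
def fiberPartition (f : α → β) : Finpartition (univ : Finset α) :=
  Finpartition.ofSetoid (Setoid.ker f)

theorem parts_fiberPartition (f : α → β) :
    (fiberPartition f).parts = univ.image fun x => ({y | f x = f y} : Finset α) :=
  Finpartition.ofSetSetoid_parts (Setoid.ker f) univ

theorem mem_part_fiberPartition {f : α → β} {x y : α} :
    y ∈ (fiberPartition f).part x ↔ f x = f y :=
  Finpartition.mem_part_ofSetoid_iff_rel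

theorem card_parts_fiberPartition [Fintype β] {f : α → β} (hf : Function.Surjective f) :
    #(fiberPartition f).parts = Fintype.card β := by
  have himage : (fiberPartition f).parts = univ.image fun b => ({y | b = f y} : Finset α) := by
    rw [parts_fiberPartition, ← image_univ_of_surjective hf, image_image]
    rfl
  rw [himage, card_image_of_injective _ fun b b' hbb' => ?_, card_univ]
  obtain ⟨x, rfl⟩ := hf b
  simpa [eq_comm] using congrArg (x ∈ ·) hbb'

theorem fiberPartition_comp {p : β → γ} (hp : Function.Injective p) (f : α → β) :
    fiberPartition (p ∘ f) = fiberPartition f := by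
  ext : 1
  simp [parts_fiberPartition, hp.eq_iff]

theorem exists_surjective_fiberPartition_eq (P : Finpartition (univ : Finset α)) :
    ∃ f : α → Fin #P.parts, Function.Surjective f ∧ fiberPartition f = P := by
  let f : α → Fin #P.parts := fun x => P.parts.equivFin ⟨P.part x, P.part_mem.2 (mem_univ x)⟩
  have hf (x : α) : ({y | f x = f y} : Finset α) = P.part x := by
    ext y
    simp [f, P.mem_part_iff_part_eq_part (mem_univ y) (mem_univ x), eq_comm]
  refine ⟨f, P.parts.equivFin.surjective.comp fun p => ?_, ?_⟩
  · obtain ⟨x, -, hx⟩ := P.part_surjOn p.2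
    exact ⟨x, Subtype.ext hx⟩
  · ext s : 2
    simp only [parts_fiberPartition, hf, mem_image, mem_univ, true_and]
    exact ⟨fun ⟨x, hx⟩ => hx ▸ P.part_mem.2 (mem_univ x),
      fun hs => by simpa using P.part_surjOn hs⟩

theorem factorsThrough_of_isSubpartitionOf {m : ℕ}
    {f : Fin m → β} {q : Fin m → γ} (h : (fiberPartition f).IsSubpartitionOf (fiberPartition q)) :
    f.FactorsThrough q := by
  intro x y hxy
  rw [← mem_part_fiberPartition]
  obtain ⟨S, hS, hSx⟩ := h _ ((fiberPartition f).part_mem.2 (mem_univ x))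
  have hx : x ∈ (fiberPartition f).part x := (fiberPartition f).mem_part_self.2 (mem_univ x)
  rw [hSx, mem_sup] at hx ⊢
  obtain ⟨s, hs, hxs⟩ := hx
  refine ⟨s, hs, ?_⟩
  rwa [id, ← (fiberPartition q).part_eq_of_mem (hS hs) hxs, mem_part_fiberPartition]

end FiberPartition

namespace ParameterWord

variable {n l k : ℕ}

/-- The partition of the positions of a word without letters into the occurrences of its
parameters. -/
def toFinpartition (w : ParameterWord Empty n k) : Finpartition (univ : Finset (Fin n)) :=
  fiberPartition (w.eval Empty.elim (id : Fin k → Fin k))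

theorem card_parts_toFinpartition (w : ParameterWord Empty n k) :
    #w.toFinpartition.parts = k := by
  rw [toFinpartition, card_parts_fiberPartition w.eval_surjective, Fintype.card_fin]

theorem exists_subst_toFinpartition_eq {W : ParameterWord Empty n l}
    {P : Finpartition (univ : Finset (Fin n))} (hP : P.IsSubpartitionOf W.toFinpartition) :
    ∃ u : ParameterWord Empty l #P.parts, (W.subst id u).toFinpartition = P := by
  obtain ⟨f, hf, hfP⟩ := exists_surjective_fiberPartition_eq P
  rw [← hfP] at hP
  obtain ⟨g, rfl⟩ : ∃ g, g ∘ W.eval Empty.elim id = f :=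
    ⟨f ∘ Function.surjInv W.eval_surjective, funext fun x =>
      factorsThrough_of_isSubpartitionOf hP (Function.surjInv_eq W.eval_surjective _)⟩
  obtain ⟨u, σ, rfl⟩ := exists_comp_eval_eq hf.of_comp
  have hu : (W.subst id u).eval Empty.elim id =
      u.eval Empty.elim id ∘ W.eval Empty.elim (id : Fin l → Fin l) := by
    rw [eval_subst, comp_eval]
    congr 1
    exact Subsingleton.elim _ _
  exact ⟨u, by rw [toFinpartition, hu]; exact (fiberPartition_comp σ.injective _).symm.trans hfP⟩

end ParameterWord

/-- **The Graham–Rothschild dual Ramsey theorem.** For every number of colors `c ≥ 1` and all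
positive integers `k, l` there is a positive integer `m` such that for every coloring with `c`
colors of the `k`-partitions of `[m]` there is an `l`-partition `Q` of `[m]` all of whose
`k`-subpartitions get the same color. -/
theorem graham_rothschild_dual_ramsey (c k l : ℕ) (hc : 0 < c) (hk : 0 < k) (hl : 0 < l) :
    ∃ m : ℕ, 0 < m ∧
      ∀ χ : Finpartition (Finset.univ : Finset (Fin m)) → Fin c,
        ∃ Q : Finpartition (Finset.univ : Finset (Fin m)), Q.parts.card = l ∧
          ∃ color : Fin c,
            ∀ P : Finpartition (Finset.univ : Finset (Fin m)),
              P.parts.card = k → P.IsSubpartitionOf Q → χ P = color := by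
  have : NeZero c := ⟨hc.ne'⟩
  obtain ⟨m, hm⟩ := ParameterWord.exists_arrows Empty (Fin c) l k
  refine ⟨m, ?_, fun χ => ?_⟩
  · obtain ⟨W, -⟩ := hm fun _ => 0
    obtain ⟨l, rfl⟩ := Nat.exists_eq_add_one.2 hl
    exact Nat.zero_lt_of_lt W.length_leadingLetters_lt
  · obtain ⟨W, color, hW⟩ := hm fun w => χ w.toFinpartition
    refine ⟨W.toFinpartition, W.card_parts_toFinpartition, color, ?_⟩
    rintro P rfl hP
    obtain ⟨u, hu⟩ := ParameterWord.exists_subst_toFinpartition_eq hP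
    exact hu ▸ hW u
end
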